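/- Let d be a locally compact length metric on X, let h, ρ: I×X → (0,∞) be locally Lipschitz, and let F = {d_{ρ(s,·)} : s ∈ I} be the family of conformally weighted length metrics (so |β'_t|_{d_{ρ(s,·)}} = ρ(s,β_t)|β'_t|_d a.e. for absolutely continuous curves β). If γ: [a,b] → hI×_F X is a maximizing causal curve (i.e., τ(γ) = τ(γ_a,γ_b)) with τ(γ) > 0, then γ is timelike, i.e., h(γ_t)² α'(t)² − v_β(α_t,t)² > 0 for a.e. t ∈ [a,b]. -/

import Mathlib

open Filter MeasureTheory Set Topology
open scoped ENNReal NNReal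

noncomputable section

/-- The metric speed of a curve `β` at time `t` w.r.t. a distance function `dist`. -/
def mSpeed {X : Type*} (dst : X → X → ℝ) (β : ℝ → X) (t : ℝ) : ℝ :=
  Filter.limsup (fun e : ℝ => dst (β (t + e)) (β t) / |e|) (nhdsWithin (0 : ℝ) {0}ᶜ)

/-- The generalized metric speed `v_β(s,t)` of a curve `β` w.r.t. the family of
metrics `d`. -/
def genSpeed {X : Type*} (d : ℝ → X → X → ℝ) (β : ℝ → X) (s t : ℝ) : ℝ :=
  Filter.limsup (fun e : ℝ => (∫ u in t..(t + e), mSpeed (d s) β u) / e)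
    (nhdsWithin (0 : ℝ) {0}ᶜ)

/-- Absolute continuity of a curve on `[a,b]` w.r.t. a distance function. -/
def ACOn {X : Type*} (dst : X → X → ℝ) (β : ℝ → X) (a b : ℝ) : Prop :=
  ∃ g : ℝ → ℝ, MeasureTheory.IntegrableOn g (Set.Icc a b) ∧
    ∀ ⦃t u : ℝ⦄, t ∈ Set.Icc a b → u ∈ Set.Icc a b → t ≤ u →
      dst (β t) (β u) ≤ ∫ r in t..u, g r

/-- The standard distance on `ℝ`. -/
def rdist : ℝ → ℝ → ℝ := fun x y => |x - y|

/-- `d` is a family of metrics on `X` indexed by `s ∈ I`, each generating the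
topology of `X`. -/
def IsMetricFamily {X : Type*} [TopologicalSpace X] (I : Set ℝ) (d : ℝ → X → X → ℝ) : Prop :=
  ∀ s ∈ I,
    (∀ x : X, d s x x = 0) ∧ (∀ x y : X, x ≠ y → 0 < d s x y) ∧
    (∀ x y : X, d s x y = d s y x) ∧ (∀ x y z : X, d s x z ≤ d s x y + d s y z) ∧
    (∀ x : X, (nhds x).HasBasis (fun ε : ℝ => 0 < ε) (fun ε => {y | d s x y < ε}))

/-- Condition (C): local uniform continuity of `s ↦ d_s` in a logarithmic sense. -/
def CondC {X : Type*} [TopologicalSpace X] (I : Set ℝ) (d : ℝ → X → X → ℝ) : Prop :=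
  ∀ J : Set ℝ, ∀ K : Set X, J ⊆ I → IsCompact J → IsCompact K →
    ∃ r > (0 : ℝ), ∃ ω : ℝ → ℝ, ω 0 = 0 ∧ Monotone ω ∧ ContinuousAt ω 0 ∧
      ∀ s ∈ J, ∀ s' ∈ J, ∀ x ∈ K, ∀ y ∈ K, x ≠ y →
        sInf ((fun u => d u x y) '' J) < r →
        |Real.log (d s x y / d s' x y)| ≤ ω |s - s'|

/-- Condition (L): local log-Lipschitz dependence of `d_s` on `s`. -/
def CondL {X : Type*} [TopologicalSpace X] (I : Set ℝ) (d : ℝ → X → X → ℝ) : Prop :=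
  ∀ J : Set ℝ, ∀ K : Set X, J ⊆ I → IsCompact J → IsCompact K →
    ∃ C > (0 : ℝ), ∃ r > (0 : ℝ),
      ∀ s ∈ J, ∀ s' ∈ J, ∀ x ∈ K, ∀ y ∈ K, x ≠ y →
        sInf ((fun u => d u x y) '' J) < r →
        |Real.log (d s x y / d s' x y)| ≤ C * |s - s'|

/-- Condition (H): Lipschitz continuity of `h` in the time variable, locally
uniformly. -/
def CondH {X : Type*} [TopologicalSpace X] (I : Set ℝ) (h : ℝ → X → ℝ) : Prop :=
  ∀ J : Set ℝ, ∀ K : Set X, J ⊆ I → IsCompact J → IsCompact K →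
    ∃ C' > (0 : ℝ), ∀ s ∈ J, ∀ s' ∈ J, ∀ x ∈ K, |h s x - h s' x| ≤ C' * |s - s'|

/-- A curve `(α, β) : [a,b] → I × X` with both components absolutely continuous. -/
def CurveIn {X : Type*} (I : Set ℝ) (d : ℝ → X → X → ℝ) (α : ℝ → ℝ) (β : ℝ → X)
    (a b : ℝ) : Prop :=
  a < b ∧ ACOn rdist α a b ∧ (∀ s ∈ I, ACOn (d s) β a b) ∧ ∀ t ∈ Set.Icc a b, α t ∈ I

/-- Future directed: `α' > 0` a.e. -/
def FutureDirected (α : ℝ → ℝ) (a b : ℝ) : Prop :=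
  ∀ᵐ t : ℝ, t ∈ Set.Ioo a b → 0 < deriv α t

/-- Past directed: `α' < 0` a.e. -/
def PastDirected (α : ℝ → ℝ) (a b : ℝ) : Prop :=
  ∀ᵐ t : ℝ, t ∈ Set.Ioo a b → deriv α t < 0

/-- The causality inequality `v_β(α_t,t)² ≤ h(γ_t)² α'(t)²` a.e. -/
def CausalIneq {X : Type*} (d : ℝ → X → X → ℝ) (h : ℝ → X → ℝ) (α : ℝ → ℝ)
    (β : ℝ → X) (a b : ℝ) : Prop :=
  ∀ᵐ t : ℝ, t ∈ Set.Ioo a b →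
    (genSpeed d β (α t) t) ^ 2 ≤ (h (α t) (β t)) ^ 2 * (deriv α t) ^ 2

/-- The timelike inequality `v_β(α_t,t)² < h(γ_t)² α'(t)²` a.e. -/
def TimelikeIneq {X : Type*} (d : ℝ → X → X → ℝ) (h : ℝ → X → ℝ) (α : ℝ → ℝ)
    (β : ℝ → X) (a b : ℝ) : Prop :=
  ∀ᵐ t : ℝ, t ∈ Set.Ioo a b →
    (genSpeed d β (α t) t) ^ 2 < (h (α t) (β t)) ^ 2 * (deriv α t) ^ 2

/-- Future directed causal curve. -/
def FutureCausal {X : Type*} (I : Set ℝ) (d : ℝ → X → X → ℝ) (h : ℝ → X → ℝ)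
    (α : ℝ → ℝ) (β : ℝ → X) (a b : ℝ) : Prop :=
  CurveIn I d α β a b ∧ FutureDirected α a b ∧ CausalIneq d h α β a b

/-- Future directed timelike curve. -/
def FutureTimelike {X : Type*} (I : Set ℝ) (d : ℝ → X → X → ℝ) (h : ℝ → X → ℝ)
    (α : ℝ → ℝ) (β : ℝ → X) (a b : ℝ) : Prop :=
  CurveIn I d α β a b ∧ FutureDirected α a b ∧ TimelikeIneq d h α β a b

/-- Causal curve (future or past directed). -/
def CausalCurve {X : Type*} (I : Set ℝ) (d : ℝ → X → X → ℝ) (h : ℝ → X → ℝ)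
    (α : ℝ → ℝ) (β : ℝ → X) (a b : ℝ) : Prop :=
  CurveIn I d α β a b ∧ (FutureDirected α a b ∨ PastDirected α a b) ∧
    CausalIneq d h α β a b

/-- The causal relation `p ≤ q` in the generalized Lorentzian product. -/
def causalRel {X : Type*} (I : Set ℝ) (d : ℝ → X → X → ℝ) (h : ℝ → X → ℝ)
    (p q : ℝ × X) : Prop :=
  ∃ a b α β, FutureCausal I d h α β a b ∧
    α a = p.1 ∧ β a = p.2 ∧ α b = q.1 ∧ β b = q.2

/-- The chronological relation `p ≪ q` in the generalized Lorentzian product. -/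
def chronRel {X : Type*} (I : Set ℝ) (d : ℝ → X → X → ℝ) (h : ℝ → X → ℝ)
    (p q : ℝ × X) : Prop :=
  ∃ a b α β, FutureTimelike I d h α β a b ∧
    α a = p.1 ∧ β a = p.2 ∧ α b = q.1 ∧ β b = q.2

/-- The Lorentzian length of a curve. -/
def lorLen {X : Type*} (d : ℝ → X → X → ℝ) (h : ℝ → X → ℝ) (α : ℝ → ℝ) (β : ℝ → X)
    (a b : ℝ) : ℝ :=
  ∫ t in a..b,
    Real.sqrt ((h (α t) (β t)) ^ 2 * (deriv α t) ^ 2 - (genSpeed d β (α t) t) ^ 2)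

/-- The time separation function `τ` of the generalized Lorentzian product. -/
def timeSep {X : Type*} (I : Set ℝ) (d : ℝ → X → X → ℝ) (h : ℝ → X → ℝ)
    (p q : ℝ × X) : ℝ≥0∞ :=
  sSup {l | ∃ a b α β, FutureCausal I d h α β a b ∧
    α a = p.1 ∧ β a = p.2 ∧ α b = q.1 ∧ β b = q.2 ∧
    l = ENNReal.ofReal (lorLen d h α β a b)}

end

noncomputable section

open Filter MeasureTheory Set Topology
open scoped ENNReal

/-- The length of a curve `β : [0,1] → X` weighted by the conformal factor `g`. -/
def confLen {X : Type*} [MetricSpace X] (g : X → ℝ) (β : ℝ → X) : ℝ :=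
  ∫ t in (0 : ℝ)..1, g (β t) * mSpeed (fun a b : X => dist a b) β t

/-- The conformally weighted length metric `d_g`. -/
def confMetric {X : Type*} [MetricSpace X] (g : X → ℝ) (x y : X) : ℝ :=
  sInf {l | ∃ β : ℝ → X, ACOn (fun a b : X => dist a b) β 0 1 ∧
    β 0 = x ∧ β 1 = y ∧ l = confLen g β}

/-- `X` is a length space: the distance is the infimum of lengths of absolutely
continuous curves. -/
def IsLengthMetric (X : Type*) [MetricSpace X] : Prop :=
  ∀ x y : X, dist x y = confMetric (fun _ => (1 : ℝ)) x y

/-- Local Lipschitz continuity of a function on `I × X`. -/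
def LocLipOn {X : Type*} [MetricSpace X] (I : Set ℝ) (f : ℝ → X → ℝ) : Prop :=
  ∀ J : Set ℝ, ∀ K : Set X, J ⊆ I → IsCompact J → IsCompact K →
    ∃ C : ℝ, ∀ s ∈ J, ∀ s' ∈ J, ∀ x ∈ K, ∀ y ∈ K,
      |f s x - f s' y| ≤ C * (|s - s'| + dist x y)

/-!
Fix the space component `β` and vary only the time component `α`. If the causal inequality is
saturated on a set `A` of positive measure, positivity of the length also provides a set `B` on
which it is strict with a uniform gap. Speed `α` up on `A` and slow it down on `B`, by an amount of
order `ε` which preserves the endpoints. On `A` the integrand `√(h² α'² - v_β²)` grows from `0` to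
order `√ε`, because the square root has infinite slope at `0`, while on `B` it loses only `O(ε)`.
The dependence of `h` and `v_β` on time costs a relative error proportional to the displacement of
`α`; the integrating factor `exp (k α)` in the variation adds enough to `α'` to dominate it, so the
varied curve is still causal, and it is longer for small `ε`.
-/

section RealAnalysis

variable {f g k v : ℝ → ℝ} {a b c t : ℝ}

theorem ae_mem_Ioc_of_ae_mem_Ioo {p : ℝ → Prop} (h : ∀ᵐ t : ℝ, t ∈ Ioo a b → p t) :
    ∀ᵐ t : ℝ, t ∈ Ioc a b → p t := by
  filter_upwards [h, volume.ae_ne b] with t ht hne hmem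
  exact ht ⟨hmem.1, hmem.2.lt_of_ne hne⟩

theorem abs_sub_le_integral_of_abs_deriv_le (hab : a ≤ b)
    (hf : AbsolutelyContinuousOnInterval f a b) (hk : IntervalIntegrable k volume a b)
    (hle : ∀ᵐ t : ℝ, t ∈ Ioo a b → |deriv f t| ≤ k t) : |f b - f a| ≤ ∫ t in a..b, k t := by
  have hle' : ∀ᵐ t : ℝ, t ∈ Ioc a b → ‖deriv f t‖ ≤ k t := ae_mem_Ioc_of_ae_mem_Ioo hle
  rw [← hf.integral_deriv_eq_sub]
  exact intervalIntegral.norm_integral_le_of_norm_le hab hle' hk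

theorem lt_of_ae_deriv_pos (hab : a < b) (hf : AbsolutelyContinuousOnInterval f a b)
    (hpos : ∀ᵐ t : ℝ, t ∈ Ioo a b → 0 < deriv f t) : f a < f b := by
  have hpos' : ∀ᵐ t : ℝ, t ∈ Ioc a b → 0 < deriv f t := ae_mem_Ioc_of_ae_mem_Ioo hpos
  have hint : 0 < ∫ t in a..b, deriv f t := by
    rw [intervalIntegral.integral_pos_iff_support_of_nonneg_ae'
      (by
        rw [uIoc_of_le hab.le]
        exact (ae_restrict_iff' measurableSet_Ioc).2 (hpos'.mono fun t ht hmem => (ht hmem).le))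
      hf.intervalIntegrable_deriv]
    refine ⟨hab, ?_⟩
    have hsub : Ioc a b ≤ᵐ[volume] (Function.support (deriv f) ∩ Ioc a b : Set ℝ) :=
      hpos'.mono fun t ht hmem => ⟨(ht hmem).ne', hmem⟩
    exact (by simpa using hab : 0 < volume (Ioc a b)).trans_le (measure_mono_ae hsub)
  rw [hf.integral_deriv_eq_sub] at hint
  linarith

theorem lt_of_ae_deriv_neg (hab : a < b) (hf : AbsolutelyContinuousOnInterval f a b)
    (hneg : ∀ᵐ t : ℝ, t ∈ Ioo a b → deriv f t < 0) : f b < f a := by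
  have hlt := lt_of_ae_deriv_pos hab hf.neg (by
    filter_upwards [hneg] with t ht hmem
    rw [deriv.neg]
    linarith [ht hmem])
  simpa using hlt

theorem ae_hasDerivAt_integral_self (hg : IntervalIntegrable g volume a b) :
    ∀ᵐ t : ℝ, t ∈ Ioo a b → HasDerivAt (fun u => ∫ x in t..u, g x) (g t) t := by
  filter_upwards [hg.ae_hasDerivAt_integral] with t ht hmem
  have hmem' : t ∈ uIcc a b := Icc_subset_uIcc (Ioo_subset_Icc_self hmem)
  exact ht hmem' t hmem'

theorem tendsto_add_nhds_of_punctured (t : ℝ) :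
    Tendsto (fun e : ℝ => t + e) (𝓝[≠] 0) (𝓝 t) := by
  have h : Tendsto (fun e : ℝ => t + e) (𝓝 0) (𝓝 (t + 0)) := tendsto_const_nhds.add tendsto_id
  rw [add_zero] at h
  exact h.mono_left nhdsWithin_le_nhds

theorem tendsto_average_of_hasDerivAt (h : HasDerivAt (fun u => ∫ x in t..u, g x) c t) :
    Tendsto (fun e : ℝ => (∫ u in t..(t + e), g u) / e) (𝓝[≠] 0) (𝓝 c) := by
  simpa [div_eq_inv_mul] using h.tendsto_slope_zero

theorem eventually_intervalIntegrable (hg : IntervalIntegrable g volume a b) (ht : t ∈ Ioo a b) :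
    ∀ᶠ u in 𝓝 t, IntervalIntegrable g volume t u := by
  filter_upwards [Ioo_mem_nhds ht.1 ht.2] with u hu
  exact hg.mono_set (uIcc_subset_uIcc (Icc_subset_uIcc (Ioo_subset_Icc_self ht))
    (Icc_subset_uIcc (Ioo_subset_Icc_self hu)))

theorem isLittleO_integral_sub_mul (hk : ContinuousAt k t) (hv0 : ∀ u, 0 ≤ v u)
    (hv : ∀ᶠ u in 𝓝 t, IntervalIntegrable v volume t u) :
    (fun u => ∫ x in t..u, (k x - k t) * v x) =o[𝓝 t] fun u => ∫ x in t..u, v x := by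
  refine Asymptotics.isLittleO_iff.2 fun ε hε => ?_
  obtain ⟨δ, hδ, hball⟩ :=
    Metric.eventually_nhds_iff_ball.1 (hk.eventually (Metric.closedBall_mem_nhds _ hε))
  filter_upwards [Metric.ball_mem_nhds t hδ, hv] with u hu hvu
  have hle : ‖∫ x in t..u, (k x - k t) * v x‖ ≤ |∫ x in t..u, ε * v x| := by
    refine intervalIntegral.norm_integral_le_abs_of_norm_le ?_ (hvu.const_mul ε)
    refine (ae_restrict_iff' measurableSet_uIoc).2 (Eventually.of_forall fun x hx => ?_)
    rw [norm_mul, Real.norm_of_nonneg (hv0 x)]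
    refine mul_le_mul_of_nonneg_right (hball x ?_) (hv0 x)
    rw [Real.ball_eq_Ioo] at hu ⊢
    exact ordConnected_Ioo.uIcc_subset ⟨by linarith, by linarith⟩ hu (uIoc_subset_uIcc hx)
  rwa [intervalIntegral.integral_const_mul, abs_mul, abs_of_pos hε] at hle

theorem hasDerivAt_integral_mul (hk : ContinuousAt k t) (hv0 : ∀ u, 0 ≤ v u)
    (hv : ∀ᶠ u in 𝓝 t, IntervalIntegrable v volume t u)
    (hkv : ∀ᶠ u in 𝓝 t, IntervalIntegrable (fun x => k x * v x) volume t u)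
    (hder : HasDerivAt (fun u => ∫ x in t..u, v x) c t) :
    HasDerivAt (fun u => ∫ x in t..u, k x * v x) (k t * c) t := by
  have hO : (fun u => ∫ x in t..u, v x) =O[𝓝 t] fun u => u - t := by
    simpa using hder.isBigO_sub
  have hrest : HasDerivAt (fun u => ∫ x in t..u, (k x - k t) * v x) 0 t :=
    hasDerivAt_iff_isLittleO.2
      (((isLittleO_integral_sub_mul hk hv0 hv).trans_isBigO hO).congr_left fun u => by simp)
  have hsum := hrest.add (hder.const_mul (k t))
  rw [zero_add] at hsum
  refine hsum.congr_of_eventuallyEq ?_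
  filter_upwards [hv, hkv] with u hvu hkvu
  simp only [Pi.add_apply, sub_mul]
  rw [intervalIntegral.integral_sub hkvu (hvu.const_mul _), intervalIntegral.integral_const_mul,
    sub_add_cancel]

theorem limsup_eq_mul_limsup_of_tendsto {ι : Type*} {F : Filter ι} [F.NeBot] {u w : ι → ℝ}
    (hc : 0 ≤ c) (hu : ∀ i, 0 ≤ u i) (hb : IsBoundedUnder (· ≤ ·) F u)
    (h : Tendsto (fun i => w i - c * u i) F (𝓝 0)) : limsup w F = c * limsup u F := by
  have hmono : Monotone fun x : ℝ => c * x := monotone_mul_left_of_nonneg hc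
  have hcu : c * limsup u F = limsup (fun i => c * u i) F :=
    hmono.map_limsup_of_continuousAt u (continuous_const_mul c).continuousAt hb
      (isBoundedUnder_of ⟨0, hu⟩ : IsBoundedUnder (· ≥ ·) F u).isCoboundedUnder_le
  have hbcu : IsBoundedUnder (· ≤ ·) F fun i => c * u i :=
    hb.comp (q := (· ≤ ·)) fun _ _ hxy => hmono hxy
  have hbcu' : IsBoundedUnder (· ≥ ·) F fun i => c * u i :=
    isBoundedUnder_of ⟨0, fun i => mul_nonneg hc (hu i)⟩
  have hw : w = (fun i => c * u i) + fun i => w i - c * u i := by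
    funext i
    simp
  rw [hw, hcu]
  refine le_antisymm ?_ ?_
  · refine (limsup_add_le hbcu' hbcu h.isBoundedUnder_ge.isCoboundedUnder_le
      h.isBoundedUnder_le).trans_eq ?_
    rw [h.limsup_eq, add_zero]
  · refine le_trans ?_ (le_limsup_add hbcu hbcu'.isCoboundedUnder_le h.isBoundedUnder_le
      h.isBoundedUnder_ge)
    rw [h.liminf_eq, add_zero]

end RealAnalysis

section AbsoluteContinuity

variable {Y Z : Type*} [PseudoMetricSpace Y] [PseudoMetricSpace Z] {a b : ℝ}

theorem absolutelyContinuousOnInterval_of_dist_le_mul_dist {f : ℝ → Y} {F : ℝ → Z} {C : ℝ}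
    (hF : AbsolutelyContinuousOnInterval F a b)
    (hle : ∀ t ∈ uIcc a b, ∀ u ∈ uIcc a b, dist (f t) (f u) ≤ C * dist (F t) (F u)) :
    AbsolutelyContinuousOnInterval f a b := by
  unfold AbsolutelyContinuousOnInterval at hF ⊢
  have hCF := hF.const_mul C
  rw [mul_zero] at hCF
  refine squeeze_zero' (Eventually.of_forall fun E => Finset.sum_nonneg fun _ _ => dist_nonneg)
    ?_ hCF
  filter_upwards [mem_inf_of_right (mem_principal_self _)] with E hE
  rw [Finset.mul_sum]
  exact Finset.sum_le_sum fun i hi => hle _ (hE.1 i hi).1 _ (hE.1 i hi).2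

theorem absolutelyContinuousOnInterval_comp_of_locallyLipschitz {E : Type*}
    [SeminormedAddCommGroup E] {φ : E → Z} {f : ℝ → E} (hφ : LocallyLipschitz φ)
    (hf : AbsolutelyContinuousOnInterval f a b) :
    AbsolutelyContinuousOnInterval (fun t => φ (f t)) a b := by
  obtain ⟨C, hC⟩ := hφ.locallyLipschitzOn.exists_lipschitzOnWith_of_compact
    (isCompact_uIcc.image_of_continuousOn hf.continuousOn)
  exact absolutelyContinuousOnInterval_of_dist_le_mul_dist hf fun t ht u hu =>
    hC.dist_le_mul _ (mem_image_of_mem f ht) _ (mem_image_of_mem f hu)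

theorem ACOn.exists_primitive {X : Type*} {dst : X → X → ℝ} {β : ℝ → X} (hab : a ≤ b)
    (hβ : ACOn dst β a b) : ∃ F : ℝ → ℝ, AbsolutelyContinuousOnInterval F a b ∧
      ∀ t ∈ Icc a b, ∀ u ∈ Icc a b, t ≤ u → dst (β t) (β u) ≤ dist (F t) (F u) := by
  obtain ⟨g, hg, hle⟩ := hβ
  have hgi : IntervalIntegrable g volume a b :=
    (intervalIntegrable_iff_integrableOn_Icc_of_le hab).2 hg
  have hga : ∀ s ∈ Icc a b, IntervalIntegrable g volume a s := fun s hs =>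
    hgi.mono_set (uIcc_subset_uIcc left_mem_uIcc (Icc_subset_uIcc hs))
  refine ⟨fun t => ∫ r in a..t, g r,
    hgi.absolutelyContinuousOnInterval_intervalIntegral left_mem_uIcc, fun t ht u hu htu => ?_⟩
  rw [dist_comm, Real.dist_eq,
    intervalIntegral.integral_interval_sub_left (hga u hu) (hga t ht)]
  exact (hle ht hu htu).trans (le_abs_self _)

theorem ACOn.absolutelyContinuousOnInterval {f : ℝ → Y} (hab : a ≤ b) (hf : ACOn dist f a b) :
    AbsolutelyContinuousOnInterval f a b := by
  obtain ⟨F, hF, hle⟩ := hf.exists_primitive hab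
  refine absolutelyContinuousOnInterval_of_dist_le_mul_dist (C := 1) hF fun t ht u hu => ?_
  rw [uIcc_of_le hab] at ht hu
  rw [one_mul]
  rcases le_total t u with htu | hut
  · exact hle t ht u hu htu
  · rw [dist_comm (f t), dist_comm (F t)]
    exact hle u hu t ht hut

theorem ACOn.of_absolutelyContinuousOnInterval {f : ℝ → ℝ} (hab : a ≤ b)
    (hf : AbsolutelyContinuousOnInterval f a b) : ACOn rdist f a b := by
  have hint := hf.intervalIntegrable_deriv
  refine ⟨fun t => |deriv f t|, (intervalIntegrable_iff_integrableOn_Icc_of_le hab).1 hint.abs,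
    fun t u ht hu htu => ?_⟩
  have hsub : uIcc t u ⊆ uIcc a b := uIcc_subset_uIcc (Icc_subset_uIcc ht) (Icc_subset_uIcc hu)
  rw [rdist, abs_sub_comm]
  exact abs_sub_le_integral_of_abs_deriv_le htu (hf.mono hsub) (hint.abs.mono_set hsub)
    (Eventually.of_forall fun _ _ => le_rfl)

theorem ACOn.mono {X : Type*} {dst : X → X → ℝ} {β : ℝ → X} {c e : ℝ}
    (hβ : ACOn dst β a b) (hsub : Icc c e ⊆ Icc a b) : ACOn dst β c e := by
  obtain ⟨g, hg, hle⟩ := hβ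
  exact ⟨g, hg.mono_set hsub, fun t u ht hu htu => hle (hsub ht) (hsub hu) htu⟩

theorem ACOn.comp_lipschitzWith {φ : Y → Z} {C : ℝ≥0} (hφ : LipschitzWith C φ) {β : ℝ → Y}
    (hβ : ACOn dist β a b) : ACOn dist (fun t => φ (β t)) a b := by
  obtain ⟨g, hg, hle⟩ := hβ
  refine ⟨fun t => C * g t, hg.const_mul C, fun t u ht hu htu => ?_⟩
  rw [intervalIntegral.integral_const_mul]
  exact (hφ.dist_le_mul _ _).trans (mul_le_mul_of_nonneg_left (hle ht hu htu) C.2)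

theorem ACOn.continuousOn {β : ℝ → Y} (hβ : ACOn dist β a b) : ContinuousOn β (Icc a b) := by
  intro t ht
  obtain ⟨F, hF, hle⟩ := hβ.exists_primitive (ht.1.trans ht.2)
  have hFt : Tendsto F (𝓝[Icc a b] t) (𝓝 (F t)) :=
    hF.continuousOn.mono Icc_subset_uIcc t ht
  refine tendsto_iff_dist_tendsto_zero.2 (squeeze_zero' (Eventually.of_forall fun _ => dist_nonneg)
    ?_ (tendsto_iff_dist_tendsto_zero.1 hFt))
  filter_upwards [self_mem_nhdsWithin] with u hu
  rcases le_total u t with hut | htu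
  · exact hle u hu t ht hut
  · rw [dist_comm, dist_comm (F u)]
    exact hle t ht u hu htu

theorem ACOn.of_eventually_dist_le {β : ℝ → Y} {G : ℝ → ℝ} (hβ : ContinuousOn β (Icc a b))
    (hG : IntegrableOn G (Icc a b))
    (hle : ∀ t ∈ Ico a b, ∀ᶠ u in 𝓝[>] t, dist (β t) (β u) ≤ ∫ r in t..u, G r) :
    ACOn dist β a b := by
  refine ⟨G, hG, fun t u ht hu htu => ?_⟩
  have hab : a ≤ b := ht.1.trans ht.2
  have hGi : IntervalIntegrable G volume a b :=
    (intervalIntegrable_iff_integrableOn_Icc_of_le hab).2 hG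
  have hGi' : ∀ p ∈ Icc a b, ∀ q ∈ Icc a b, IntervalIntegrable G volume p q := fun p hp q hq =>
    hGi.mono_set (uIcc_subset_uIcc (Icc_subset_uIcc hp) (Icc_subset_uIcc hq))
  have hsub : Icc t u ⊆ Icc a b := Icc_subset_Icc ht.1 hu.2
  have hprim : ContinuousOn (fun w => ∫ r in t..w, G r) (Icc t u) :=
    ((hGi.absolutelyContinuousOnInterval_intervalIntegral (Icc_subset_uIcc ht)).continuousOn).mono
      (hsub.trans Icc_subset_uIcc)
  have hclosed : IsClosed ({w | dist (β t) (β w) ≤ ∫ r in t..w, G r} ∩ Icc t u) := by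
    rw [inter_comm]
    exact isClosed_Icc.isClosed_le
      ((continuous_const.dist continuous_id).comp_continuousOn (hβ.mono hsub)) hprim
  refine hclosed.Icc_subset_of_forall_mem_nhdsWithin (by simp) ?_ (right_mem_Icc.2 htu)
  rintro w ⟨hw, hwmem⟩
  have hwab : w ∈ Icc a b := hsub (Ico_subset_Icc_self hwmem)
  filter_upwards [hle w ⟨hwab.1, hwmem.2.trans_le hu.2⟩, Ioc_mem_nhdsGT hwmem.2] with x hx hxmem
  have hxab : x ∈ Icc a b := ⟨hwab.1.trans hxmem.1.le, hxmem.2.trans hu.2⟩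
  calc dist (β t) (β x) ≤ dist (β t) (β w) + dist (β w) (β x) := dist_triangle _ _ _
    _ ≤ (∫ r in t..w, G r) + ∫ r in w..x, G r := add_le_add hw hx
    _ = ∫ r in t..x, G r := intervalIntegral.integral_add_adjacent_intervals
        (hGi' t ht w hwab) (hGi' w hwab x hxab)

end AbsoluteContinuity

section MetricSpeed

theorem mSpeed_nonneg {X : Type*} {dst : X → X → ℝ} (hd : ∀ x y, 0 ≤ dst x y) (β : ℝ → X)
    (t : ℝ) : 0 ≤ mSpeed dst β t := by
  rw [mSpeed, limsup_eq]
  refine Real.sInf_nonneg fun c hc => ?_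
  obtain ⟨e, he⟩ := Eventually.exists (f := 𝓝[≠] (0 : ℝ)) hc
  exact (div_nonneg (hd _ _) (abs_nonneg _)).trans he

theorem genSpeed_eq_of_hasDerivAt {X : Type*} {d : ℝ → X → X → ℝ} {β : ℝ → X} {s t c : ℝ}
    (h : HasDerivAt (fun u => ∫ x in t..u, mSpeed (d s) β x) c t) : genSpeed d β s t = c :=
  (tendsto_average_of_hasDerivAt h).limsup_eq

theorem mSpeed_congr {X : Type*} {dst : X → X → ℝ} {β γ : ℝ → X} {t : ℝ} (h : β =ᶠ[𝓝 t] γ) :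
    mSpeed dst β t = mSpeed dst γ t := by
  refine limsup_congr ?_
  filter_upwards [(tendsto_add_nhds_of_punctured t).eventually h] with e he
  rw [he, h.self_of_nhds]

variable {X : Type*} [PseudoMetricSpace X] {β : ℝ → X} {a b t : ℝ}

/-- The difference quotients of `β` at `t` stay bounded, so that the real-valued limit superior
`mSpeed dist β t` is not a junk value. -/
def FiniteSpeedAt (β : ℝ → X) (t : ℝ) : Prop :=
  IsBoundedUnder (· ≤ ·) (𝓝[≠] (0 : ℝ)) fun e => dist (β (t + e)) (β t) / |e|

theorem isCoboundedUnder_dist_div_abs (β : ℝ → X) (t : ℝ) :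
    IsCoboundedUnder (· ≤ ·) (𝓝[≠] (0 : ℝ)) fun e => dist (β (t + e)) (β t) / |e| :=
  IsBoundedUnder.isCoboundedUnder_le
    (isBoundedUnder_of ⟨0, fun _ => div_nonneg dist_nonneg (abs_nonneg _)⟩)

theorem toReal_limsup_ofReal_eq_mSpeed (β : ℝ → X) (t : ℝ) :
    (limsup (fun e : ℝ => ENNReal.ofReal (dist (β (t + e)) (β t) / |e|)) (𝓝[≠] 0)).toReal =
      mSpeed dist β t := by
  by_cases hb : FiniteSpeedAt β t
  · have hmap := ENNReal.ofReal_mono.map_limsup_of_continuousAt _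
      ENNReal.continuous_ofReal.continuousAt hb (isCoboundedUnder_dist_div_abs β t)
    rw [Function.comp_def] at hmap
    rw [← hmap]
    exact ENNReal.toReal_ofReal (mSpeed_nonneg (dst := dist) (fun _ _ => dist_nonneg) β t)
  · have htop : limsup (fun e : ℝ => ENNReal.ofReal (dist (β (t + e)) (β t) / |e|)) (𝓝[≠] 0) =
        ⊤ := by
      by_contra hne
      obtain ⟨c, hc, hctop⟩ := exists_between (lt_top_iff_ne_top.2 hne)
      refine hb ⟨c.toReal, eventually_map.2 ((eventually_lt_of_limsup_lt hc).mono fun e he => ?_)⟩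
      exact (ENNReal.ofReal_le_iff_le_toReal hctop.ne).1 he.le
    have hempty : {c : ℝ | ∀ᶠ e in 𝓝[≠] (0 : ℝ), dist (β (t + e)) (β t) / |e| ≤ c} = ∅ :=
      eq_empty_of_forall_notMem fun c hc => hb ⟨c, eventually_map.2 hc⟩
    rw [htop, ENNReal.toReal_top, mSpeed, limsup_eq, hempty, Real.sInf_empty]

theorem measurable_mSpeed (hβ : Continuous β) : Measurable (mSpeed dist β) := by
  have hlimsup : Measurable fun t =>
      limsup (fun e : ℝ => ENNReal.ofReal (dist (β (t + e)) (β t) / |e|)) (𝓝[≠] 0) := by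
    have hbasis := nhdsWithin_hasBasis (Metric.nhds_basis_ball_inv_nat_succ (x := (0 : ℝ))) {0}ᶜ
    simp_rw [hbasis.limsup_eq_iInf_iSup]
    refine Measurable.iInf fun n => ?_
    simp only [ciInf_unique]
    refine LowerSemicontinuous.measurable ?_
    refine lowerSemicontinuous_iSup fun e => lowerSemicontinuous_iSup fun _ => ?_
    exact (ENNReal.continuous_ofReal.comp (by fun_prop)).lowerSemicontinuous
  simpa only [toReal_limsup_ofReal_eq_mSpeed] using hlimsup.ennreal_toReal

theorem aestronglyMeasurable_mSpeed (hab : a ≤ b) (hβ : ContinuousOn β (Icc a b)) :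
    AEStronglyMeasurable (mSpeed dist β) (volume.restrict (Ioo a b)) := by
  have hext : Continuous (IccExtend hab ((Icc a b).domRestrict β)) :=
    (continuousOn_iff_continuous_domRestrict.1 hβ).Icc_extend'
  refine (measurable_mSpeed hext).aestronglyMeasurable.congr
    ((ae_restrict_iff' measurableSet_Ioo).2 (Eventually.of_forall fun t ht => mSpeed_congr ?_))
  filter_upwards [Ioo_mem_nhds ht.1 ht.2] with u hu
  rw [IccExtend_of_mem _ _ (Ioo_subset_Icc_self hu), domRestrict_apply]

theorem FiniteSpeedAt.of_tendsto {q : ℝ → ℝ} {l : ℝ} (hq : Tendsto q (𝓝[≠] 0) (𝓝 l))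
    (hle : ∀ᶠ e in 𝓝[≠] (0 : ℝ), dist (β (t + e)) (β t) / |e| ≤ q e) : FiniteSpeedAt β t :=
  hq.isBoundedUnder_le.mono_le hle

theorem mSpeed_le_of_tendsto {q : ℝ → ℝ} {l : ℝ} (hq : Tendsto q (𝓝[≠] 0) (𝓝 l))
    (hle : ∀ᶠ e in 𝓝[≠] (0 : ℝ), dist (β (t + e)) (β t) / |e| ≤ q e) : mSpeed dist β t ≤ l := by
  rw [mSpeed, ← hq.limsup_eq]
  exact limsup_le_limsup hle (isCoboundedUnder_dist_div_abs β t) hq.isBoundedUnder_le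

theorem dist_div_abs_le_average {g : ℝ → ℝ}
    (hle : ∀ ⦃t u : ℝ⦄, t ∈ Icc a b → u ∈ Icc a b → t ≤ u → dist (β t) (β u) ≤ ∫ r in t..u, g r)
    (ht : t ∈ Ioo a b) :
    ∀ᶠ e in 𝓝[≠] (0 : ℝ), dist (β (t + e)) (β t) / |e| ≤ (∫ u in t..(t + e), g u) / e := by
  filter_upwards [(tendsto_add_nhds_of_punctured t).eventually (Ioo_mem_nhds ht.1 ht.2),
    self_mem_nhdsWithin] with e he hne
  have ht' := Ioo_subset_Icc_self ht
  have he' := Ioo_subset_Icc_self he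
  rcases lt_or_gt_of_ne (show e ≠ 0 from hne) with hneg | hpos
  · rw [abs_of_neg hneg, intervalIntegral.integral_symm, neg_div, ← div_neg]
    exact div_le_div_of_nonneg_right (hle he' ht' (by linarith)) (by linarith)
  · rw [abs_of_pos hpos, dist_comm]
    exact div_le_div_of_nonneg_right (hle ht' he' (by linarith)) hpos.le

theorem ACOn.ae_finiteSpeedAt (hab : a ≤ b) (hβ : ACOn dist β a b) :
    ∀ᵐ t : ℝ, t ∈ Ioo a b → FiniteSpeedAt β t := by
  obtain ⟨g, hg, hle⟩ := hβ
  filter_upwards [ae_hasDerivAt_integral_self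
    ((intervalIntegrable_iff_integrableOn_Icc_of_le hab).2 hg)] with t hder ht
  exact .of_tendsto (tendsto_average_of_hasDerivAt (hder ht)) (dist_div_abs_le_average hle ht)

theorem ACOn.intervalIntegrable_mSpeed (hab : a ≤ b) (hβ : ACOn dist β a b) :
    IntervalIntegrable (mSpeed dist β) volume a b := by
  have hcont := hβ.continuousOn
  obtain ⟨g, hg, hle⟩ := hβ
  rw [intervalIntegrable_iff_integrableOn_Ioc_of_le hab, integrableOn_Ioc_iff_integrableOn_Ioo]
  refine (hg.mono_set Ioo_subset_Icc_self).mono' (aestronglyMeasurable_mSpeed hab hcont)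
    ((ae_restrict_iff' measurableSet_Ioo).2 ?_)
  filter_upwards [ae_hasDerivAt_integral_self
    ((intervalIntegrable_iff_integrableOn_Icc_of_le hab).2 hg)] with t hder ht
  rw [Real.norm_of_nonneg (mSpeed_nonneg (dst := dist) (fun _ _ => dist_nonneg) β t)]
  exact mSpeed_le_of_tendsto (tendsto_average_of_hasDerivAt (hder ht))
    (dist_div_abs_le_average hle ht)

theorem FiniteSpeedAt.abs_deriv_comp_le {φ : X → ℝ} {C : ℝ≥0} (hβ : FiniteSpeedAt β t)
    (hφ : LipschitzWith C φ) (hd : DifferentiableAt ℝ (fun s => φ (β s)) t) :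
    |deriv (fun s => φ (β s)) t| ≤ C * mSpeed dist β t := by
  have hlim := hd.hasDerivAt.tendsto_slope_zero.abs
  have hmono : Monotone fun x : ℝ => (C : ℝ) * x := monotone_mul_left_of_nonneg C.2
  rw [mSpeed, hmono.map_limsup_of_continuousAt _ (continuous_const_mul _).continuousAt hβ
    (isCoboundedUnder_dist_div_abs β t), ← hlim.limsup_eq]
  refine limsup_le_limsup (Eventually.of_forall fun e => ?_)
    hlim.isBoundedUnder_ge.isCoboundedUnder_le (hβ.comp (q := (· ≤ ·)) fun _ _ h => hmono h)
  simp only [Function.comp_apply, smul_eq_mul]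
  rw [abs_mul, abs_inv, ← div_eq_inv_mul, ← mul_div_assoc, ← Real.dist_eq]
  exact div_le_div_of_nonneg_right (hφ.dist_le_mul _ _) (abs_nonneg e)

theorem ACOn.abs_sub_le_integral {φ : X → ℝ} {C : ℝ≥0} (hφ : LipschitzWith C φ) (hab : a ≤ b)
    (hβ : ACOn dist β a b) {k : ℝ → ℝ} (hk : IntervalIntegrable k volume a b)
    (hle : ∀ t ∈ Ioo a b, |deriv (fun s => φ (β s)) t| ≤ C * mSpeed dist β t →
      |deriv (fun s => φ (β s)) t| ≤ k t) :
    |φ (β b) - φ (β a)| ≤ ∫ t in a..b, k t := by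
  have hac := (hβ.comp_lipschitzWith hφ).absolutelyContinuousOnInterval hab
  refine abs_sub_le_integral_of_abs_deriv_le hab hac hk ?_
  filter_upwards [hac.ae_differentiableAt, hβ.ae_finiteSpeedAt hab] with t hd hfin ht
  exact hle t ht
    ((hfin ht).abs_deriv_comp_le hφ (hd (Icc_subset_uIcc (Ioo_subset_Icc_self ht))))

theorem ACOn.dist_le_integral_mSpeed (hab : a ≤ b) (hβ : ACOn dist β a b) :
    dist (β a) (β b) ≤ ∫ t in a..b, mSpeed dist β t := by
  simpa using hβ.abs_sub_le_integral (LipschitzWith.dist_left (β b)) hab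
    (hβ.intervalIntegrable_mSpeed hab) fun t _ h => by simpa using h

end MetricSpeed

section ConformalMetric

variable {X : Type*} [MetricSpace X] {g : X → ℝ} {β : ℝ → X} {a b t : ℝ}

theorem ACOn.intervalIntegrable_mul_mSpeed (hg : Continuous g) (hab : a ≤ b)
    (hβ : ACOn dist β a b) :
    IntervalIntegrable (fun t => g (β t) * mSpeed dist β t) volume a b :=
  (hβ.intervalIntegrable_mSpeed hab).continuousOn_mul <| by
    rw [uIcc_of_le hab]
    exact hg.comp_continuousOn hβ.continuousOn

theorem confLen_nonneg (hg : ∀ x, 0 ≤ g x) (β : ℝ → X) : 0 ≤ confLen g β :=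
  intervalIntegral.integral_nonneg zero_le_one fun t _ =>
    mul_nonneg (hg _) (mSpeed_nonneg (dst := dist) (fun _ _ => dist_nonneg) β t)

theorem confMetric_le_confLen (hg : ∀ x, 0 ≤ g x) (hβ : ACOn dist β 0 1) :
    confMetric g (β 0) (β 1) ≤ confLen g β := by
  refine csInf_le ⟨0, ?_⟩ ⟨β, hβ, rfl, rfl, rfl⟩
  rintro l ⟨γ, -, -, -, rfl⟩
  exact confLen_nonneg hg γ

theorem IsLengthMetric.exists_path (hlen : IsLengthMetric X) (x y : X) :
    ∃ β : ℝ → X, ACOn dist β 0 1 ∧ β 0 = x ∧ β 1 = y := by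
  by_contra hne
  have hdist : dist x y = 0 := by
    rw [hlen x y, confMetric]
    convert Real.sInf_empty
    refine eq_empty_of_forall_notMem ?_
    rintro l ⟨β, hβ, h0, h1, -⟩
    exact hne ⟨β, hβ, h0, h1⟩
  exact hne ⟨fun _ => x, ⟨fun _ => 0, integrableOn_zero, by simp⟩, rfl, dist_eq_zero.1 hdist⟩

theorem IsLengthMetric.le_confMetric (hlen : IsLengthMetric X) {x y : X} {c : ℝ}
    (hc : ∀ β : ℝ → X, ACOn dist β 0 1 → β 0 = x → β 1 = y → c ≤ confLen g β) :
    c ≤ confMetric g x y := by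
  obtain ⟨β₀, hβ₀, h0, h1⟩ := hlen.exists_path x y
  refine le_csInf ⟨_, β₀, hβ₀, h0, h1, rfl⟩ ?_
  rintro l ⟨β, hβ, hx, hy, rfl⟩
  exact hc β hβ hx hy

theorem IsLengthMetric.exists_integral_mSpeed_lt (hlen : IsLengthMetric X) {x y : X} {L : ℝ}
    (hL : dist x y < L) : ∃ β : ℝ → X, ACOn dist β 0 1 ∧ β 0 = x ∧ β 1 = y ∧
      ∫ t in (0 : ℝ)..1, mSpeed dist β t < L := by
  by_contra! hlong
  refine hL.not_ge ?_
  rw [hlen x y]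
  refine hlen.le_confMetric fun β hβ hx hy => ?_
  simpa only [confLen, one_mul] using hlong β hβ hx hy

-- Truncating `dist · z` at radius `r` makes its derivative vanish where `m ≤ g` may fail.
theorem ACOn.mul_abs_min_sub_min_le_confLen (hg : Continuous g) (hg0 : ∀ x, 0 ≤ g x) {m r : ℝ}
    (hm : 0 < m) {z : X} (hmg : ∀ x, dist x z ≤ r → m ≤ g x) (hβ : ACOn dist β 0 1) :
    m * |min r (dist (β 1) z) - min r (dist (β 0) z)| ≤ confLen g β := by
  rw [← le_inv_mul_iff₀ hm, confLen, ← intervalIntegral.integral_const_mul]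
  have hφ : LipschitzWith 1 fun x : X => min r (dist x z) :=
    (LipschitzWith.dist_left z).const_min r
  refine hβ.abs_sub_le_integral hφ zero_le_one
    ((hβ.intervalIntegrable_mul_mSpeed hg zero_le_one).const_mul _) fun t ht hle => ?_
  rw [NNReal.coe_one, one_mul] at hle
  have hspeed := mSpeed_nonneg (dst := dist) (fun _ _ => dist_nonneg) β t
  rw [le_inv_mul_iff₀ hm]
  rcases le_or_gt (dist (β t) z) r with hin | hout
  · exact mul_le_mul (hmg _ hin) hle (abs_nonneg _) (hg0 _)
  · have hdist : ContinuousAt (fun s => dist (β s) z) t :=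
      (hβ.continuousOn.continuousAt (Icc_mem_nhds ht.1 ht.2)).dist continuousAt_const
    have hconst : (fun s => min r (dist (β s) z)) =ᶠ[𝓝 t] fun _ => r :=
      (hdist.eventually (lt_mem_nhds hout)).mono fun s hs => min_eq_left hs.le
    rw [hconst.deriv_eq, deriv_const, abs_zero, mul_zero]
    exact mul_nonneg (hg0 _) hspeed

theorem IsLengthMetric.exists_mul_min_le_confMetric (hlen : IsLengthMetric X) (hg : Continuous g)
    (hg0 : ∀ x, 0 ≤ g x) {x : X} {m : ℝ} (hm : 0 < m) (hmx : m < g x) :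
    ∃ r > 0, ∀ y, m * min r (dist y x) ≤ confMetric g x y ∧
      m * min r (dist y x) ≤ confMetric g y x := by
  obtain ⟨r, hr, hball⟩ :=
    Metric.nhds_basis_closedBall.mem_iff.1 (hg.continuousAt.eventually (lt_mem_nhds hmx))
  refine ⟨r, hr, fun y => ⟨?_, ?_⟩⟩ <;> refine hlen.le_confMetric fun β hβ h0 h1 => ?_ <;>
    have hle := hβ.mul_abs_min_sub_min_le_confLen hg hg0 hm fun z hz => (hball hz).le <;>
    rw [h0, h1, dist_self, min_eq_right hr.le] at hle
  · rwa [sub_zero, abs_of_nonneg (le_min hr.le dist_nonneg)] at hle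
  · rwa [zero_sub, abs_neg, abs_of_nonneg (le_min hr.le dist_nonneg)] at hle

theorem IsLengthMetric.confMetric_le (hlen : IsLengthMetric X) (hg : Continuous g)
    (hg0 : ∀ x, 0 ≤ g x) {M r : ℝ} {x y : X} (hMg : ∀ z, dist z y ≤ r → g z ≤ M)
    (hxy : dist x y < r) : confMetric g x y ≤ M * dist x y := by
  have hM : 0 ≤ M := (hg0 y).trans (hMg y (by rw [dist_self]; exact dist_nonneg.trans hxy.le))
  have hle : ∀ L ∈ Ioo (dist x y) r, confMetric g x y ≤ M * L := by
    rintro L ⟨hL, hLr⟩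
    obtain ⟨β, hβ, rfl, rfl, hβL⟩ := hlen.exists_integral_mSpeed_lt hL
    have hspeed := mSpeed_nonneg (dst := dist) (fun _ _ => dist_nonneg) β
    have hint := hβ.intervalIntegrable_mSpeed zero_le_one
    have hnear : ∀ t ∈ Icc (0 : ℝ) 1, dist (β t) (β 1) ≤ r := fun t ht =>
      calc dist (β t) (β 1) ≤ ∫ u in t..1, mSpeed dist β u :=
            (hβ.mono (Icc_subset_Icc_left ht.1)).dist_le_integral_mSpeed ht.2
        _ ≤ ∫ u in (0 : ℝ)..1, mSpeed dist β u :=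
            intervalIntegral.integral_mono_interval ht.1 ht.2 le_rfl (.of_forall hspeed) hint
        _ ≤ r := (hβL.trans hLr).le
    calc confMetric g (β 0) (β 1) ≤ confLen g β := confMetric_le_confLen hg0 hβ
      _ ≤ ∫ t in (0 : ℝ)..1, M * mSpeed dist β t :=
          intervalIntegral.integral_mono_on zero_le_one
            (hβ.intervalIntegrable_mul_mSpeed hg zero_le_one) (hint.const_mul M) fun t ht =>
              mul_le_mul_of_nonneg_right (hMg _ (hnear t ht)) (hspeed t)
      _ = M * ∫ t in (0 : ℝ)..1, mSpeed dist β t := intervalIntegral.integral_const_mul _ _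
      _ ≤ M * L := mul_le_mul_of_nonneg_left hβL.le hM
  exact ge_of_tendsto ((continuous_const_mul M).continuousAt.tendsto.mono_left
    (nhdsWithin_le_nhds (s := Ioi (dist x y)))) (eventually_of_mem (Ioo_mem_nhdsGT hxy) hle)

theorem IsLengthMetric.confMetric_sub_isLittleO (hlen : IsLengthMetric X) (hg : Continuous g)
    (hg0 : ∀ x, 0 < g x) (x : X) :
    (fun y => confMetric g y x - g x * dist y x) =o[𝓝 x] fun y => dist y x := by
  refine Asymptotics.isLittleO_iff.2 fun ε hε => ?_
  have hg0' : ∀ x, 0 ≤ g x := fun x => (hg0 x).le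
  obtain ⟨R, hR, hball⟩ := Metric.nhds_basis_closedBall.mem_iff.1
    (hg.continuousAt.eventually (gt_mem_nhds (lt_add_of_pos_right (g x) hε)))
  obtain ⟨m, hm, hmx⟩ := exists_between (max_lt (sub_lt_self (g x) hε) (hg0 x))
  obtain ⟨hεm, hm0⟩ := max_lt_iff.1 hm
  obtain ⟨r, hr, hlow⟩ := hlen.exists_mul_min_le_confMetric hg hg0' hm0 hmx
  filter_upwards [Metric.ball_mem_nhds x hR, Metric.ball_mem_nhds x hr] with y hyR hyr
  rw [Metric.mem_ball] at hyR hyr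
  have hlower := (hlow y).2
  rw [min_eq_right hyr.le] at hlower
  have hupper := hlen.confMetric_le hg hg0' (fun z hz => (hball hz).le) hyR
  have hεdist := mul_le_mul_of_nonneg_right hεm.le (dist_nonneg (x := y) (y := x))
  rw [Real.norm_of_nonneg dist_nonneg, Real.norm_eq_abs, abs_le]
  constructor <;> linarith

theorem IsLengthMetric.mSpeed_confMetric (hlen : IsLengthMetric X) (hg : Continuous g)
    (hg0 : ∀ x, 0 < g x) (hβ : ContinuousAt β t) (hfin : FiniteSpeedAt β t) :
    mSpeed (confMetric g) β t = g (β t) * mSpeed dist β t := by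
  have hquot : ∀ e, 0 ≤ dist (β (t + e)) (β t) / |e| := fun e =>
    div_nonneg dist_nonneg (abs_nonneg e)
  refine limsup_eq_mul_limsup_of_tendsto (hg0 _).le hquot hfin ?_
  have hone : (fun e => dist (β (t + e)) (β t) / |e|) =O[𝓝[≠] 0] fun _ => (1 : ℝ) := by
    refine IsBoundedUnder.isBigO_one ℝ ?_
    simpa only [FiniteSpeedAt, Function.comp_def, Real.norm_of_nonneg (hquot _)] using hfin
  have hdiff := ((hlen.confMetric_sub_isLittleO hg hg0 (β t)).comp_tendsto
    (hβ.tendsto.comp (tendsto_add_nhds_of_punctured t))).mul_isBigO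
      (Asymptotics.isBigO_refl (fun e : ℝ => |e|⁻¹) _)
  refine ((Asymptotics.isLittleO_one_iff ℝ).1 (hdiff.trans_isBigO hone)).congr fun e => ?_
  simp only [Function.comp_apply]
  ring

theorem IsLengthMetric.continuousOn_of_acOn_confMetric (hlen : IsLengthMetric X)
    (hg : Continuous g) (hg0 : ∀ x, 0 < g x) (hβ : ACOn (confMetric g) β a b) :
    ContinuousOn β (Icc a b) := by
  intro t ht
  obtain ⟨F, hF, hle⟩ := hβ.exists_primitive (ht.1.trans ht.2)
  have hm : 0 < g (β t) / 2 := half_pos (hg0 _)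
  obtain ⟨r, hr, hlow⟩ :=
    hlen.exists_mul_min_le_confMetric hg (fun x => (hg0 x).le) hm (half_lt_self (hg0 _))
  have hFt : Tendsto F (𝓝[Icc a b] t) (𝓝 (F t)) := hF.continuousOn.mono Icc_subset_uIcc t ht
  refine Metric.tendsto_nhds.2 fun ε hε => ?_
  filter_upwards [self_mem_nhdsWithin,
    Metric.tendsto_nhds.1 hFt _ (mul_pos hm (lt_min hr hε))] with u hu hlt
  have hmin : g (β t) / 2 * min r (dist (β u) (β t)) ≤ dist (F u) (F t) := by
    rcases le_total t u with htu | hut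
    · rw [dist_comm (F u)]
      exact (hlow _).1.trans (hle t ht u hu htu)
    · exact (hlow _).2.trans (hle u hu t ht hut)
  by_contra! hfar
  exact (lt_of_mul_lt_mul_left (hmin.trans_lt hlt) hm.le).not_ge (min_le_min_left r hfar)

theorem IsLengthMetric.acOn_of_acOn_confMetric (hlen : IsLengthMetric X) (hg : Continuous g)
    (hg0 : ∀ x, 0 < g x) (hβ : ACOn (confMetric g) β a b) : ACOn dist β a b := by
  have hcont := hlen.continuousOn_of_acOn_confMetric hg hg0 hβ
  obtain ⟨m', hm', hle'⟩ := isCompact_Icc.exists_forall_le' (hg.comp_continuousOn hcont)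
    fun t _ => hg0 (β t)
  obtain ⟨m, hm, hmm'⟩ := exists_between hm'
  obtain ⟨G, hG, hle⟩ := hβ
  refine .of_eventually_dist_le hcont (hG.const_mul m⁻¹) fun t ht => ?_
  have ht' := Ico_subset_Icc_self ht
  obtain ⟨r, hr, hlow⟩ := hlen.exists_mul_min_le_confMetric hg (fun x => (hg0 x).le) hm
    (hmm'.trans_le (hle' t ht'))
  have hnear : ∀ᶠ u in 𝓝[>] t, dist (β u) (β t) < r :=
    ((hcont t ht').mono_of_mem_nhdsWithin (mem_of_superset (Ioo_mem_nhdsGT ht.2) fun u hu =>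
      ⟨ht.1.trans hu.1.le, hu.2.le⟩)).eventually (Metric.ball_mem_nhds _ hr)
  filter_upwards [Ioo_mem_nhdsGT ht.2, hnear] with u hu hur
  rw [intervalIntegral.integral_const_mul, le_inv_mul_iff₀ hm, dist_comm, ← min_eq_right hur.le]
  exact (hlow _).1.trans (hle ht' ⟨ht.1.trans hu.1.le, hu.2.le⟩ hu.1.le)

theorem IsLengthMetric.ae_genSpeed_confMetric (hlen : IsLengthMetric X) {I : Set ℝ}
    {ρ : ℝ → X → ℝ} (hρ : ∀ s ∈ I, Continuous (ρ s)) (hρ0 : ∀ s ∈ I, ∀ x, 0 < ρ s x)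
    (hab : a ≤ b) (hβ : ACOn dist β a b) :
    ∀ᵐ t : ℝ, t ∈ Ioo a b → ∀ s ∈ I,
      genSpeed (fun s => confMetric (ρ s)) β s t = ρ s (β t) * mSpeed dist β t := by
  have hcont : ∀ t ∈ Ioo a b, ContinuousAt β t := fun t ht =>
    hβ.continuousOn.continuousAt (Icc_mem_nhds ht.1 ht.2)
  have hint := hβ.intervalIntegrable_mSpeed hab
  filter_upwards [ae_hasDerivAt_integral_self hint] with t hder ht s hs
  have hspeed : ∀ᵐ u : ℝ, u ∈ Ioo a b →
      mSpeed (confMetric (ρ s)) β u = ρ s (β u) * mSpeed dist β u := by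
    filter_upwards [hβ.ae_finiteSpeedAt hab] with u hfin hu
    exact hlen.mSpeed_confMetric (hρ s hs) (hρ0 s hs) (hcont u hu) (hfin hu)
  have hmul := hasDerivAt_integral_mul (k := fun u => ρ s (β u))
    ((hρ s hs).continuousAt.comp (hcont t ht))
    (mSpeed_nonneg (dst := dist) (fun _ _ => dist_nonneg) β)
    (eventually_intervalIntegrable hint ht)
    (eventually_intervalIntegrable (hβ.intervalIntegrable_mul_mSpeed (hρ s hs) hab) ht) (hder ht)
  refine genSpeed_eq_of_hasDerivAt (hmul.congr_of_eventuallyEq ?_)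
  filter_upwards [Ioo_mem_nhds ht.1 ht.2] with u hu
  refine intervalIntegral.integral_congr_ae (hspeed.mono fun x hx hmem => hx ?_)
  exact ordConnected_Ioo.uIcc_subset ht hu (uIoc_subset_uIcc hmem)

end ConformalMetric

section TimeFunctions

/-- A positive weight `f s t`, continuous in the parameter `t ∈ [a, b]` and locally Lipschitz in the
time `s ∈ I`: what remains of a function on `I × X` after restricting it to a curve in `X`. -/
structure IsTimeWeight (I : Set ℝ) (a b : ℝ) (f : ℝ → ℝ → ℝ) : Prop where
  pos : ∀ s ∈ I, ∀ t ∈ Icc a b, 0 < f s t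
  continuousOn : ∀ s ∈ I, ContinuousOn (f s) (Icc a b)
  lipschitz : ∀ J ⊆ I, IsCompact J →
    ∃ C, ∀ s ∈ J, ∀ s' ∈ J, ∀ t ∈ Icc a b, |f s t - f s' t| ≤ C * |s - s'|

/-- The contribution `h α'` of the time component `α` to the Lorentzian speed. -/
def timeSpeed (H : ℝ → ℝ → ℝ) (α : ℝ → ℝ) (t : ℝ) : ℝ := H (α t) t * deriv α t

/-- The contribution `v_β` of the space component to the Lorentzian speed, when that component is
traversed with speed `v` and weighted by `R`. -/
def spaceSpeed (R : ℝ → ℝ → ℝ) (v α : ℝ → ℝ) (t : ℝ) : ℝ := R (α t) t * v t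

/-- The integrand of the Lorentzian length. -/
def properSpeed (H R : ℝ → ℝ → ℝ) (v α : ℝ → ℝ) (t : ℝ) : ℝ :=
  √(timeSpeed H α t ^ 2 - spaceSpeed R v α t ^ 2)

/-- The time component `α` of a future directed causal curve whose space component is fixed. -/
structure IsCausalTime (I : Set ℝ) (H R : ℝ → ℝ → ℝ) (v α : ℝ → ℝ) (a b : ℝ) : Prop where
  absolutelyContinuous : AbsolutelyContinuousOnInterval α a b
  mem : ∀ t ∈ Icc a b, α t ∈ I
  deriv_pos : ∀ᵐ t : ℝ, t ∈ Ioo a b → 0 < deriv α t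
  causal : ∀ᵐ t : ℝ, t ∈ Ioo a b → spaceSpeed R v α t ≤ timeSpeed H α t

/-- A neighbourhood of radius `r` of the graph of `α` in which `H` decreases and `R` increases at
relative rate at most `K`. -/
structure IsTube (I : Set ℝ) (H R : ℝ → ℝ → ℝ) (α : ℝ → ℝ) (a b r K : ℝ) : Prop where
  radius_pos : 0 < r
  rate_nonneg : 0 ≤ K
  rate_mul_radius_le : K * r ≤ 1 / 4
  mem : ∀ t ∈ Icc a b, ∀ s, |s - α t| ≤ r → s ∈ I
  sub_mul_le : ∀ t ∈ Icc a b, ∀ s, |s - α t| ≤ r → (1 - K * |s - α t|) * H (α t) t ≤ H s t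
  le_add_mul : ∀ t ∈ Icc a b, ∀ s, |s - α t| ≤ r → R s t ≤ (1 + K * |s - α t|) * R (α t) t

variable {I J : Set ℝ} {H R f : ℝ → ℝ → ℝ} {v α : ℝ → ℝ} {a b : ℝ}

theorem IsTimeWeight.continuousOn_comp (hf : IsTimeWeight I a b f)
    (hα : ContinuousOn α (Icc a b)) (hαI : ∀ t ∈ Icc a b, α t ∈ I) :
    ContinuousOn (fun t => f (α t) t) (Icc a b) := by
  obtain ⟨C, hC⟩ := hf.lipschitz (α '' Icc a b) (image_subset_iff.2 hαI)
    (isCompact_Icc.image_of_continuousOn hα)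
  intro t ht
  have htime : Tendsto (fun u => C * |α u - α t|) (𝓝[Icc a b] t) (𝓝 0) := by
    simpa using ((hα t ht).tendsto.sub_const (α t)).abs.const_mul C
  have hdiff : Tendsto (fun u => f (α u) u - f (α t) u) (𝓝[Icc a b] t) (𝓝 0) :=
    squeeze_zero_norm' (eventually_mem_nhdsWithin.mono fun u hu =>
      hC _ (mem_image_of_mem α hu) _ (mem_image_of_mem α ht) u hu) htime
  have hsum := hdiff.add (hf.continuousOn _ (hαI t ht) t ht).tendsto
  simpa [ContinuousWithinAt] using hsum

theorem IsTimeWeight.exists_abs_sub_le_mul (hf : IsTimeWeight I a b f) (hJI : J ⊆ I)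
    (hJ : IsCompact J) (hα : ContinuousOn α (Icc a b)) (hαJ : ∀ t ∈ Icc a b, α t ∈ J) :
    ∃ K, ∀ t ∈ Icc a b, ∀ s ∈ J, |f s t - f (α t) t| ≤ K * |s - α t| * f (α t) t := by
  obtain ⟨C, hC⟩ := hf.lipschitz J hJI hJ
  obtain ⟨m, hm, hmf⟩ := isCompact_Icc.exists_forall_le'
    (hf.continuousOn_comp hα fun t ht => hJI (hαJ t ht)) fun t ht => hf.pos _ (hJI (hαJ t ht)) t ht
  refine ⟨|C| / m, fun t ht s hs => ?_⟩
  calc |f s t - f (α t) t| ≤ C * |s - α t| := hC s hs _ (hαJ t ht) t ht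
    _ ≤ |C| * |s - α t| := mul_le_mul_of_nonneg_right (le_abs_self C) (abs_nonneg _)
    _ = |C| / m * |s - α t| * m := by field_simp
    _ ≤ |C| / m * |s - α t| * f (α t) t := mul_le_mul_of_nonneg_left (hmf t ht) (by positivity)

theorem exists_isTube (hI : IsOpen I) (hH : IsTimeWeight I a b H) (hR : IsTimeWeight I a b R)
    (hα : ContinuousOn α (Icc a b)) (hαI : ∀ t ∈ Icc a b, α t ∈ I) :
    ∃ r K, IsTube I H R α a b r K := by
  have hcompact := isCompact_Icc.image_of_continuousOn hα
  obtain ⟨r, hr, hrI⟩ := hcompact.exists_cthickening_subset_open hI (image_subset_iff.2 hαI)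
  have hαJ : ∀ t ∈ Icc a b, α t ∈ Metric.cthickening r (α '' Icc a b) := fun t ht =>
    Metric.self_subset_cthickening _ (mem_image_of_mem α ht)
  obtain ⟨K₁, hK₁⟩ := hH.exists_abs_sub_le_mul hrI hcompact.cthickening hα hαJ
  obtain ⟨K₂, hK₂⟩ := hR.exists_abs_sub_le_mul hrI hcompact.cthickening hα hαJ
  set K := max (max K₁ K₂) 1
  have hK : 0 < K := zero_lt_one.trans_le (le_max_right _ _)
  have hmem : ∀ t ∈ Icc a b, ∀ s, |s - α t| ≤ min r (1 / 4 / K) →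
      s ∈ Metric.cthickening r (α '' Icc a b) := fun t ht s hs =>
    Metric.mem_cthickening_of_dist_le _ _ _ _ (mem_image_of_mem α ht) (hs.trans (min_le_left _ _))
  have hmono : ∀ {f : ℝ → ℝ → ℝ} {K' : ℝ}, IsTimeWeight I a b f → K' ≤ K → ∀ t ∈ Icc a b, ∀ s,
      K' * |s - α t| * f (α t) t ≤ K * |s - α t| * f (α t) t := fun hf hle t ht s =>
    mul_le_mul_of_nonneg_right (mul_le_mul_of_nonneg_right hle (abs_nonneg _))
      (hf.pos _ (hαI t ht) t ht).le
  refine ⟨min r (1 / 4 / K), K, lt_min hr (by positivity), hK.le, ?_,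
    fun t ht s hs => hrI (hmem t ht s hs), fun t ht s hs => ?_, fun t ht s hs => ?_⟩
  · exact (mul_le_mul_of_nonneg_left (min_le_right _ _) hK.le).trans_eq (mul_div_cancel₀ _ hK.ne')
  · have hlower := (abs_le.1 (hK₁ t ht s (hmem t ht s hs))).1
    have hle := hmono hH ((le_max_left _ _).trans (le_max_left _ _)) t ht s
    linarith
  · have hupper := (abs_le.1 (hK₂ t ht s (hmem t ht s hs))).2
    have hle := hmono hR ((le_max_right _ _).trans (le_max_left _ _)) t ht s
    linarith

theorem IsCausalTime.continuousOn (hab : a ≤ b) (hα : IsCausalTime I H R v α a b) :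
    ContinuousOn α (Icc a b) := by
  simpa only [uIcc_of_le hab] using hα.absolutelyContinuous.continuousOn

theorem IsCausalTime.intervalIntegrable_timeSpeed (hab : a ≤ b) (hH : IsTimeWeight I a b H)
    (hα : IsCausalTime I H R v α a b) : IntervalIntegrable (timeSpeed H α) volume a b :=
  hα.absolutelyContinuous.intervalIntegrable_deriv.continuousOn_mul <| by
    simpa only [uIcc_of_le hab] using hH.continuousOn_comp (hα.continuousOn hab) hα.mem

theorem IsCausalTime.intervalIntegrable_spaceSpeed (hab : a ≤ b) (hR : IsTimeWeight I a b R)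
    (hv : IntervalIntegrable v volume a b) (hα : IsCausalTime I H R v α a b) :
    IntervalIntegrable (spaceSpeed R v α) volume a b :=
  hv.continuousOn_mul <| by
    simpa only [uIcc_of_le hab] using hR.continuousOn_comp (hα.continuousOn hab) hα.mem

theorem intervalIntegrable_sqrt_sq_sub_sq {P Q : ℝ → ℝ} (hP : IntervalIntegrable P volume a b)
    (hQ : IntervalIntegrable Q volume a b) :
    IntervalIntegrable (fun t => √(P t ^ 2 - Q t ^ 2)) volume a b := by
  have hPm := hP.def'.aestronglyMeasurable.aemeasurable
  have hQm := hQ.def'.aestronglyMeasurable.aemeasurable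
  refine hP.norm.mono_fun (((hPm.pow_const 2).sub (hQm.pow_const 2)).sqrt).aestronglyMeasurable
    (Eventually.of_forall fun t => ?_)
  beta_reduce
  rw [norm_norm, Real.norm_of_nonneg (Real.sqrt_nonneg _), Real.norm_eq_abs]
  exact (Real.sqrt_le_sqrt (sub_le_self _ (sq_nonneg _))).trans_eq (Real.sqrt_sq_eq_abs _)

theorem IsCausalTime.intervalIntegrable_properSpeed (hab : a ≤ b) (hH : IsTimeWeight I a b H)
    (hR : IsTimeWeight I a b R) (hv : IntervalIntegrable v volume a b)
    (hα : IsCausalTime I H R v α a b) : IntervalIntegrable (properSpeed H R v α) volume a b :=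
  intervalIntegrable_sqrt_sq_sub_sq (hα.intervalIntegrable_timeSpeed hab hH)
    (hα.intervalIntegrable_spaceSpeed hab hR hv)

theorem IsTimeWeight.ae_timeSpeed_pos (hH : IsTimeWeight I a b H)
    (hαI : ∀ t ∈ Icc a b, α t ∈ I) (hα : ∀ᵐ t : ℝ, t ∈ Ioo a b → 0 < deriv α t) :
    ∀ᵐ t : ℝ, t ∈ Ioo a b → 0 < timeSpeed H α t := by
  filter_upwards [hα] with t hpos ht
  have ht' := Ioo_subset_Icc_self ht
  exact mul_pos (hH.pos _ (hαI t ht') t ht') (hpos ht)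

theorem IsTimeWeight.spaceSpeed_nonneg {t : ℝ} (hR : IsTimeWeight I a b R) (hv : ∀ t, 0 ≤ v t)
    (hαI : ∀ t ∈ Icc a b, α t ∈ I) (ht : t ∈ Icc a b) : 0 ≤ spaceSpeed R v α t :=
  mul_nonneg (hR.pos _ (hαI t ht) t ht).le (hv t)

end TimeFunctions

section TightGap

/-- Sets `A` and `B` of positive measure, lying on different sides of a point of `(a, b)`, such
that the inequality `Q ≤ P` is tight on `A` and has a gap on `B`, with uniform constants. -/
structure IsTightGapPair (P Q : ℝ → ℝ) (a b : ℝ) (A B : Set ℝ) (P₀ P₁ κ : ℝ) : Prop where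
  left_measurable : MeasurableSet A
  right_measurable : MeasurableSet B
  left_subset : A ⊆ Ioo a b
  right_subset : B ⊆ Ioo a b
  left_pos : 0 < volume A
  right_pos : 0 < volume B
  separated : ∃ c, (A ⊆ Iio c ∧ B ⊆ Ici c) ∨ (B ⊆ Iio c ∧ A ⊆ Ici c)
  lower_pos : 0 < P₀
  upper_nonneg : 0 ≤ P₁
  gap_pos : 0 < κ
  tight : ∀ t ∈ A, Q t = P t ∧ P₀ ≤ P t
  gap : ∀ t ∈ B, Q t + κ ≤ P t ∧ P t ≤ P₁

variable {P Q : ℝ → ℝ} {a b : ℝ} {A B : Set ℝ} {P₀ P₁ κ : ℝ}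

theorem exists_measurableSet_subset_of_not_ae {s : Set ℝ} (hs : MeasurableSet s) {q : ℕ → ℝ → Prop}
    (hq : ∀ n, NullMeasurableSet {t | q n t} (volume.restrict s))
    (h : ¬∀ᵐ t ∂volume.restrict s, ∀ n, ¬q n t) :
    ∃ n, ∃ A ⊆ s, MeasurableSet A ∧ 0 < volume A ∧ ∀ t ∈ A, q n t := by
  rw [ae_all_iff, not_forall] at h
  obtain ⟨n, hn⟩ := h
  obtain ⟨A, hAq, hA, hAe⟩ := (hq n).exists_measurable_subset_ae_eq
  refine ⟨n, A ∩ s, inter_subset_right, hA.inter hs, ?_, fun t ht => hAq ht.1⟩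
  rw [← Measure.restrict_apply hA, measure_congr hAe, pos_iff_ne_zero]
  intro hnull
  exact hn (by rw [ae_iff]; simpa using hnull)

theorem exists_tight_set (hP : AEMeasurable P (volume.restrict (Ioo a b)))
    (hQ : AEMeasurable Q (volume.restrict (Ioo a b)))
    (hP0 : ∀ᵐ t ∂volume.restrict (Ioo a b), 0 < P t)
    (hQP : ∀ᵐ t ∂volume.restrict (Ioo a b), Q t ≤ P t)
    (h : ¬∀ᵐ t ∂volume.restrict (Ioo a b), Q t < P t) :
    ∃ P₀ > 0, ∃ A ⊆ Ioo a b, MeasurableSet A ∧ 0 < volume A ∧ ∀ t ∈ A, Q t = P t ∧ P₀ ≤ P t := by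
  obtain ⟨n, hn⟩ := exists_measurableSet_subset_of_not_ae measurableSet_Ioo
    (q := fun n t => Q t = P t ∧ 1 / ((n : ℝ) + 1) ≤ P t)
    (fun n => (nullMeasurableSet_eq_fun hQ hP).inter (nullMeasurableSet_le aemeasurable_const hP))
    (fun hn => h (by
      filter_upwards [hn, hP0, hQP] with t hnot hpos hle
      refine lt_of_le_of_ne hle fun heq => ?_
      obtain ⟨n, hn⟩ := exists_nat_one_div_lt hpos
      exact hnot n ⟨heq, hn.le⟩))
  exact ⟨_, Nat.one_div_pos_of_nat, hn⟩

theorem exists_gap_set (hP : AEMeasurable P (volume.restrict (Ioo a b)))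
    (hQ : AEMeasurable Q (volume.restrict (Ioo a b)))
    (h : ¬∀ᵐ t ∂volume.restrict (Ioo a b), P t ≤ Q t) :
    ∃ κ > 0, ∃ P₁ ≥ 0, ∃ B ⊆ Ioo a b, MeasurableSet B ∧ 0 < volume B ∧
      ∀ t ∈ B, Q t + κ ≤ P t ∧ P t ≤ P₁ := by
  obtain ⟨n, hn⟩ := exists_measurableSet_subset_of_not_ae measurableSet_Ioo
    (q := fun n t => Q t + 1 / ((n : ℝ) + 1) ≤ P t ∧ P t ≤ n)
    (fun n => (nullMeasurableSet_le (hQ.add_const _) hP).inter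
      (nullMeasurableSet_le hP aemeasurable_const))
    (fun hn => h (by
      filter_upwards [hn] with t hnot
      by_contra! hlt
      obtain ⟨n, hn⟩ := exists_nat_one_div_lt (sub_pos.2 hlt)
      obtain ⟨k, hk⟩ := exists_nat_ge (P t)
      refine hnot (max n k) ⟨?_, hk.trans (by exact_mod_cast le_max_right n k)⟩
      have := Nat.one_div_le_one_div (α := ℝ) (le_max_left n k)
      linarith))
  exact ⟨_, Nat.one_div_pos_of_nat, _, Nat.cast_nonneg n, hn⟩

theorem exists_separated_subsets (hA : MeasurableSet A) (hB : MeasurableSet B)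
    (hAB : Disjoint A B) (hA0 : 0 < volume A) (hB0 : 0 < volume B) :
    ∃ A' ⊆ A, ∃ B' ⊆ B, MeasurableSet A' ∧ MeasurableSet B' ∧ 0 < volume A' ∧ 0 < volume B' ∧
      ∃ c, (A' ⊆ Iio c ∧ B' ⊆ Ici c) ∨ (B' ⊆ Iio c ∧ A' ⊆ Ici c) := by
  obtain ⟨x, hx, hxA⟩ := exists_mem_forall_mem_nhdsWithin_pos_measure hA0.ne'
  obtain ⟨y, hy, hyB⟩ := exists_mem_forall_mem_nhdsWithin_pos_measure hB0.ne'
  rcases lt_or_gt_of_ne (hAB.ne_of_mem hx hy) with h | h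
  · refine ⟨A ∩ Iio ((x + y) / 2), inter_subset_left, B ∩ Ici ((x + y) / 2), inter_subset_left,
      hA.inter measurableSet_Iio, hB.inter measurableSet_Ici,
      hxA _ (inter_mem_nhdsWithin _ (Iio_mem_nhds (by linarith))),
      hyB _ (inter_mem_nhdsWithin _ (Ici_mem_nhds (by linarith))),
      _, .inl ⟨inter_subset_right, inter_subset_right⟩⟩
  · refine ⟨A ∩ Ici ((x + y) / 2), inter_subset_left, B ∩ Iio ((x + y) / 2), inter_subset_left,
      hA.inter measurableSet_Ici, hB.inter measurableSet_Iio,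
      hxA _ (inter_mem_nhdsWithin _ (Ici_mem_nhds (by linarith))),
      hyB _ (inter_mem_nhdsWithin _ (Iio_mem_nhds (by linarith))),
      _, .inr ⟨inter_subset_right, inter_subset_right⟩⟩

theorem exists_isTightGapPair (hP : AEMeasurable P (volume.restrict (Ioo a b)))
    (hQ : AEMeasurable Q (volume.restrict (Ioo a b)))
    (hP0 : ∀ᵐ t ∂volume.restrict (Ioo a b), 0 < P t)
    (hQP : ∀ᵐ t ∂volume.restrict (Ioo a b), Q t ≤ P t)
    (hlt : ¬∀ᵐ t ∂volume.restrict (Ioo a b), Q t < P t)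
    (hle : ¬∀ᵐ t ∂volume.restrict (Ioo a b), P t ≤ Q t) :
    ∃ A B P₀ P₁ κ, IsTightGapPair P Q a b A B P₀ P₁ κ := by
  obtain ⟨P₀, hP₀, A, hAs, hA, hA0, htight⟩ := exists_tight_set hP hQ hP0 hQP hlt
  obtain ⟨κ, hκ, P₁, hP₁, B, hBs, hB, hB0, hgap⟩ := exists_gap_set hP hQ hle
  have hAB : Disjoint A B := Set.disjoint_left.2 fun t htA htB => by
    linarith [(htight t htA).1, (hgap t htB).1]
  obtain ⟨A', hA', B', hB', hA'm, hB'm, hA'0, hB'0, hsep⟩ :=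
    exists_separated_subsets hA hB hAB hA0 hB0
  exact ⟨A', B', P₀, P₁, κ, hA'm, hB'm, hA'.trans hAs, hB'.trans hBs, hA'0, hB'0, hsep, hP₀, hP₁,
    hκ, fun t ht => htight t (hA' ht), fun t ht => hgap t (hB' ht)⟩

theorem IsTightGapPair.disjoint (h : IsTightGapPair P Q a b A B P₀ P₁ κ) : Disjoint A B :=
  Set.disjoint_left.2 fun t htA htB => by
    linarith [(h.tight t htA).1, (h.gap t htB).1, h.gap_pos]

theorem IsTightGapPair.measureReal_right_pos (h : IsTightGapPair P Q a b A B P₀ P₁ κ) :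
    0 < volume.real B :=
  ENNReal.toReal_pos h.right_pos.ne' (measure_ne_top_of_subset h.right_subset (by simp))

end TightGap

section BalancedStep

/-- The step function which is positive on `A`, negative on `B`, and has integral zero. -/
def balancedStep (A B : Set ℝ) (t : ℝ) : ℝ :=
  A.indicator (fun _ => volume.real B) t - B.indicator (fun _ => volume.real A) t

/-- The primitive of `balancedStep A B` from `a`, which is supported in any interval `[a, b]`
containing `A` and `B`. -/
def balancedBump (A B : Set ℝ) (a t : ℝ) : ℝ := ∫ u in a..t, balancedStep A B u

variable {A B : Set ℝ} {a b c t : ℝ}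

theorem balancedStep_of_mem_left (hAB : Disjoint A B) (ht : t ∈ A) :
    balancedStep A B t = volume.real B := by
  simp [balancedStep, ht, Set.disjoint_left.1 hAB ht]

theorem balancedStep_of_mem_right (hAB : Disjoint A B) (ht : t ∈ B) :
    balancedStep A B t = -volume.real A := by
  simp [balancedStep, ht, Set.disjoint_right.1 hAB ht]

theorem balancedStep_of_notMem (hA : t ∉ A) (hB : t ∉ B) : balancedStep A B t = 0 := by
  simp [balancedStep, hA, hB]

theorem balancedStep_swap (A B : Set ℝ) (t : ℝ) : balancedStep B A t = -balancedStep A B t :=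
  (neg_sub _ _).symm

theorem intervalIntegrable_balancedStep (hA : MeasurableSet A) (hB : MeasurableSet B)
    (hAs : A ⊆ Ioo a b) (hBs : B ⊆ Ioo a b) (c e : ℝ) :
    IntervalIntegrable (balancedStep A B) volume c e := by
  have hconst : ∀ {s : Set ℝ} (y : ℝ), MeasurableSet s → s ⊆ Ioo a b →
      Integrable (s.indicator fun _ => y) := fun y hs hsub =>
    (integrable_indicator_iff hs).2 (integrableOn_const (measure_ne_top_of_subset hsub (by simp)))
  exact ((hconst _ hA hAs).sub (hconst _ hB hBs)).intervalIntegrable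

theorem integral_indicator_const_of_subset_Ioo {s : Set ℝ} (hab : a ≤ b) (hs : MeasurableSet s)
    (hsub : s ⊆ Ioo a b) (y : ℝ) :
    ∫ t in a..b, s.indicator (fun _ => y) t = volume.real s * y := by
  rw [intervalIntegral.integral_of_le hab, setIntegral_indicator hs,
    inter_eq_right.2 (hsub.trans Ioo_subset_Ioc_self), setIntegral_const, smul_eq_mul]

theorem balancedBump_left : balancedBump A B a a = 0 := intervalIntegral.integral_same

theorem balancedBump_right (hab : a ≤ b) (hA : MeasurableSet A) (hB : MeasurableSet B)
    (hAs : A ⊆ Ioo a b) (hBs : B ⊆ Ioo a b) : balancedBump A B a b = 0 := by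
  have hint : ∀ {s : Set ℝ} (y : ℝ), MeasurableSet s → s ⊆ Ioo a b →
      IntervalIntegrable (s.indicator fun _ => y) volume a b := fun y hs hsub =>
    ((integrable_indicator_iff hs).2 (integrableOn_const
      (measure_ne_top_of_subset hsub (by simp)))).intervalIntegrable
  unfold balancedBump balancedStep
  rw [intervalIntegral.integral_sub (hint _ hA hAs) (hint _ hB hBs),
    integral_indicator_const_of_subset_Ioo hab hA hAs,
    integral_indicator_const_of_subset_Ioo hab hB hBs, mul_comm, sub_self]

theorem balancedBump_swap (A B : Set ℝ) (a t : ℝ) :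
    balancedBump B A a t = -balancedBump A B a t := by
  simp only [balancedBump, balancedStep_swap A B, intervalIntegral.integral_neg]

theorem balancedStep_nonneg_of_notMem (ht : t ∉ B) : 0 ≤ balancedStep A B t := by
  rw [balancedStep, indicator_of_notMem ht, sub_zero]
  exact indicator_nonneg (fun _ _ => measureReal_nonneg) t

theorem balancedBump_nonneg (hA : MeasurableSet A) (hB : MeasurableSet B)
    (hAs : A ⊆ Ioo a b) (hBs : B ⊆ Ioo a b) (hAc : A ⊆ Iio c) (hBc : B ⊆ Ici c)
    (ht : t ∈ Icc a b) : 0 ≤ balancedBump A B a t := by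
  rcases le_total t c with htc | htc
  · rw [balancedBump, intervalIntegral.integral_of_le ht.1, integral_Ioc_eq_integral_Ioo]
    exact setIntegral_nonneg measurableSet_Ioo fun u hu =>
      balancedStep_nonneg_of_notMem fun huB => (hu.2.trans_le htc).not_ge (hBc huB)
  · have hint := intervalIntegrable_balancedStep hA hB hAs hBs
    have hadd : balancedBump A B a t + _ = balancedBump A B a b :=
      intervalIntegral.integral_add_adjacent_intervals (hint a t) (hint t b)
    have hright : 0 ≤ ∫ u in t..b, balancedStep B A u := by
      rw [intervalIntegral.integral_of_le ht.2]
      exact setIntegral_nonneg measurableSet_Ioc fun u hu =>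
        balancedStep_nonneg_of_notMem fun huA => (htc.trans hu.1.le).not_gt (hAc huA)
    simp only [balancedStep_swap A B, intervalIntegral.integral_neg] at hright
    rw [balancedBump_right (ht.1.trans ht.2) hA hB hAs hBs] at hadd
    linarith

variable {P Q : ℝ → ℝ} {P₀ P₁ κ C : ℝ}

theorem IsTightGapPair.intervalIntegrable_balancedStep
    (h : IsTightGapPair P Q a b A B P₀ P₁ κ) : IntervalIntegrable (balancedStep A B) volume a b :=
  _root_.intervalIntegrable_balancedStep h.left_measurable h.right_measurable h.left_subset
    h.right_subset a b

theorem IsTightGapPair.balancedBump_right (hab : a ≤ b)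
    (h : IsTightGapPair P Q a b A B P₀ P₁ κ) : balancedBump A B a b = 0 :=
  _root_.balancedBump_right hab h.left_measurable h.right_measurable h.left_subset h.right_subset

theorem IsTightGapPair.exists_abs_eq_mul_balancedBump_nonneg
    (h : IsTightGapPair P Q a b A B P₀ P₁ κ) (hC : 0 ≤ C) :
    ∃ k, |k| = C ∧ ∀ t ∈ Icc a b, 0 ≤ k * balancedBump A B a t := by
  obtain ⟨c, ⟨hA, hB⟩ | ⟨hB, hA⟩⟩ := h.separated
  · exact ⟨C, abs_of_nonneg hC, fun t ht => mul_nonneg hC <| balancedBump_nonneg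
      h.left_measurable h.right_measurable h.left_subset h.right_subset hA hB ht⟩
  · refine ⟨-C, (abs_neg C).trans (abs_of_nonneg hC), fun t ht => ?_⟩
    have hneg := balancedBump_nonneg
      h.right_measurable h.left_measurable h.right_subset h.left_subset hB hA ht
    rw [balancedBump_swap] at hneg
    rw [neg_mul, ← mul_neg]
    exact mul_nonneg hC hneg

end BalancedStep

section Perturbation

theorem dilation_le {H H' p y z δ : ℝ} (hH : 0 < H) (hp : 0 < p) (hz : 0 ≤ z) (hz4 : z ≤ 1 / 4)
    (hH' : (1 - z) * H ≤ H') (hδ : δ ≤ H * y) (hδ2 : 2 * δ ≤ H * y) (hpos : 0 < H * p + δ) :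
    0 < p * (1 + 4 * z) + y ∧ (1 + z) * (H * p + δ) ≤ H' * (p * (1 + 4 * z) + y) := by
  have hpy : 0 < p + y := pos_of_mul_pos_right (by linarith : 0 < H * (p + y)) hH.le
  have hspeed : 0 < p * (1 + 4 * z) + y := by linarith [mul_nonneg hp.le hz]
  refine ⟨hspeed, le_trans ?_ (mul_le_mul_of_nonneg_right hH' hspeed.le)⟩
  have hHp : (1 + 2 * z) * (H * p) ≤ (1 - z) * (1 + 4 * z) * (H * p) :=
    mul_le_mul_of_nonneg_right (by nlinarith) (mul_pos hH hp).le
  have hHy : δ + z * δ ≤ z * (H * p) + (1 - z) * (H * y) := by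
    rcases le_total 0 δ with hδ | hδ <;> nlinarith [hδ, mul_nonneg hz (mul_pos hH hp).le]
  linarith

theorem sq_sub_sq_le_of_dilation {P P' Q Q' z : ℝ} (hz : 0 ≤ z) (hQ : 0 ≤ Q) (hQP : Q ≤ P)
    (hQ' : 0 ≤ Q') (hP' : (1 + z) * P ≤ P') (hQQ' : Q' ≤ (1 + z) * Q) :
    P ^ 2 - Q ^ 2 ≤ P' ^ 2 - Q' ^ 2 := by
  have hdiff : 0 ≤ P ^ 2 - Q ^ 2 := sub_nonneg.2 (pow_le_pow_left₀ hQ hQP 2)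
  calc P ^ 2 - Q ^ 2 ≤ (1 + z) ^ 2 * (P ^ 2 - Q ^ 2) :=
        le_mul_of_one_le_left hdiff (one_le_pow₀ (by linarith))
    _ = ((1 + z) * P) ^ 2 - ((1 + z) * Q) ^ 2 := by ring
    _ ≤ P' ^ 2 - Q' ^ 2 := sub_le_sub
        (pow_le_pow_left₀ (mul_nonneg (by linarith) (hQ.trans hQP)) hP' 2)
        (pow_le_pow_left₀ hQ' hQQ' 2)

theorem sqrt_sub_div_le_sqrt {x y κ : ℝ} (hκ : 0 < κ) (hx : κ ^ 2 ≤ x) (hyx : y ≤ x) :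
    √x - (x - y) / κ ≤ √y := by
  rw [sub_le_comm, le_div_iff₀ hκ]
  calc (√x - √y) * κ ≤ (√x - √y) * (√x + √y) :=
        mul_le_mul_of_nonneg_left
          ((Real.le_sqrt_of_sq_le hx).trans (le_add_of_nonneg_right (Real.sqrt_nonneg y)))
          (sub_nonneg.2 (Real.sqrt_le_sqrt hyx))
    _ = √x ^ 2 - √y ^ 2 := by ring
    _ ≤ x - y := sub_le_sub (Real.sq_sqrt ((sq_nonneg κ).trans hx)).le
        ((le_max_left y 0).trans_eq Real.sq_sqrt'.symm)

variable {P Q : ℝ → ℝ} {a b t ε G m M : ℝ} {A B : Set ℝ} {P₀ P₁ κ : ℝ}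

theorem IsTightGapPair.exists_shift_of_mem_left (h : IsTightGapPair P Q a b A B P₀ P₁ κ)
    (ht : t ∈ A) (hm : 0 ≤ m) (hmG : m ≤ G) (hε : 0 ≤ ε) :
    ∃ δ ≥ 0, 2 * δ ≤ G * (ε * balancedStep A B t) ∧
      √(P₀ * m * volume.real B) * √ε ≤ √((P t + δ) ^ 2 - Q t ^ 2) := by
  obtain ⟨hQP, hP₀⟩ := h.tight t ht
  have hB := h.measureReal_right_pos.le
  have hδ : 0 ≤ m * (ε * volume.real B) / 2 := by positivity
  refine ⟨_, hδ, ?_, ?_⟩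
  · rw [balancedStep_of_mem_left h.disjoint ht, mul_div_cancel₀ _ two_ne_zero]
    exact mul_le_mul_of_nonneg_right hmG (mul_nonneg hε hB)
  · rw [← Real.sqrt_mul (by have := h.lower_pos; positivity), hQP]
    refine Real.sqrt_le_sqrt ?_
    nlinarith [mul_le_mul_of_nonneg_right hP₀ hδ, sq_nonneg (m * (ε * volume.real B) / 2)]

theorem IsTightGapPair.exists_shift_of_mem_right (h : IsTightGapPair P Q a b A B P₀ P₁ κ)
    (ht : t ∈ B) (hQ : 0 ≤ Q t) (hG : 0 ≤ G) (hGM : G ≤ M) (hε : 0 ≤ ε)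
    (hεκ : M * volume.real A * ε < κ) :
    ∃ δ ≤ 0, δ ≤ G * (ε * balancedStep A B t) ∧ 0 < P t + δ ∧ Q t ≤ P t + δ ∧
      √(P t ^ 2 - Q t ^ 2) - 2 * P₁ * M * volume.real A / κ * ε ≤ √((P t + δ) ^ 2 - Q t ^ 2) := by
  obtain ⟨hQP, hP₁⟩ := h.gap t ht
  have hκ := h.gap_pos
  have hM : 0 ≤ M * volume.real A * ε := by have := hG.trans hGM; positivity
  refine ⟨-(M * volume.real A * ε), neg_nonpos.2 hM, ?_, by linarith, by linarith, ?_⟩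
  · have := mul_le_mul_of_nonneg_right hGM (by positivity : 0 ≤ ε * volume.real A)
    rw [balancedStep_of_mem_right h.disjoint ht]
    linarith
  · have hgap : κ ^ 2 ≤ P t ^ 2 - Q t ^ 2 := by nlinarith
    have hdecr : (P t + -(M * volume.real A * ε)) ^ 2 ≤ P t ^ 2 :=
      pow_le_pow_left₀ (by linarith) (by linarith) 2
    refine le_trans (sub_le_sub_left ?_ _) (sqrt_sub_div_le_sqrt hκ hgap (by linarith))
    rw [div_mul_eq_mul_div]
    gcongr
    nlinarith [mul_le_mul_of_nonneg_right hP₁ hM]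

theorem IsTightGapPair.exists_shift (h : IsTightGapPair P Q a b A B P₀ P₁ κ) (hP : 0 < P t)
    (hQ : 0 ≤ Q t) (hQP : Q t ≤ P t) (hm : 0 ≤ m) (hmG : m ≤ G) (hGM : G ≤ M) (hε : 0 ≤ ε)
    (hεκ : M * volume.real A * ε < κ) :
    ∃ δ, δ ≤ G * (ε * balancedStep A B t) ∧ 2 * δ ≤ G * (ε * balancedStep A B t) ∧
      0 < P t + δ ∧ Q t ≤ P t + δ ∧
      √(P t ^ 2 - Q t ^ 2) + A.indicator (fun _ => √(P₀ * m * volume.real B) * √ε) t -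
        2 * P₁ * M * volume.real A / κ * ε ≤ √((P t + δ) ^ 2 - Q t ^ 2) := by
  have hloss : 0 ≤ 2 * P₁ * M * volume.real A / κ * ε := by
    have := h.upper_nonneg
    have := h.gap_pos
    have := hm.trans (hmG.trans hGM)
    positivity
  by_cases htA : t ∈ A
  · obtain ⟨δ, hδ, hδ2, hgain⟩ := h.exists_shift_of_mem_left htA hm hmG hε
    refine ⟨δ, by linarith, hδ2, by linarith, by linarith, ?_⟩
    have htight : √(P t ^ 2 - Q t ^ 2) = 0 := by rw [(h.tight t htA).1, sub_self, Real.sqrt_zero]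
    rw [indicator_of_mem htA, htight, zero_add]
    exact (sub_le_self _ hloss).trans hgain
  rw [indicator_of_notMem htA, add_zero]
  by_cases htB : t ∈ B
  · obtain ⟨δ, hδ, hδG, hpos, hle, hlow⟩ :=
      h.exists_shift_of_mem_right htB hQ (hm.trans hmG) hGM hε hεκ
    exact ⟨δ, hδG, by linarith, hpos, hle, hlow⟩
  · refine ⟨0, ?_, ?_, by simpa, by simpa, ?_⟩
    · simp [balancedStep_of_notMem htA htB]
    · simp [balancedStep_of_notMem htA htB]
    · rw [add_zero]
      exact sub_le_self _ hloss

theorem IsTube.sq_sub_sq_le {I : Set ℝ} {H R : ℝ → ℝ → ℝ} {v α α₁ : ℝ → ℝ} {r K y δ : ℝ}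
    (hT : IsTube I H R α a b r K) (hH : IsTimeWeight I a b H) (hR : IsTimeWeight I a b R)
    (ht : t ∈ Icc a b) (hv : 0 ≤ v t) (hr : |α₁ t - α t| ≤ r) (hα : 0 < deriv α t)
    (hα₁ : deriv α₁ t = deriv α t * (1 + 4 * K * |α₁ t - α t|) + y)
    (hδ : δ ≤ H (α t) t * y) (hδ2 : 2 * δ ≤ H (α t) t * y) (hpos : 0 < timeSpeed H α t + δ)
    (hle : spaceSpeed R v α t ≤ timeSpeed H α t + δ) :
    0 < deriv α₁ t ∧ spaceSpeed R v α₁ t ≤ timeSpeed H α₁ t ∧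
      (timeSpeed H α t + δ) ^ 2 - spaceSpeed R v α t ^ 2 ≤
        timeSpeed H α₁ t ^ 2 - spaceSpeed R v α₁ t ^ 2 := by
  have hαI : α t ∈ I := hT.mem t ht _ (by simpa using hT.radius_pos.le)
  have hz : 0 ≤ K * |α₁ t - α t| := mul_nonneg hT.rate_nonneg (abs_nonneg _)
  have hz4 : K * |α₁ t - α t| ≤ 1 / 4 :=
    (mul_le_mul_of_nonneg_left hr hT.rate_nonneg).trans hT.rate_mul_radius_le
  have htime := dilation_le (hH.pos _ hαI t ht) hα hz hz4 (hT.sub_mul_le t ht _ hr) hδ hδ2 hpos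
  rw [← mul_assoc 4, ← hα₁] at htime
  have hspace : spaceSpeed R v α₁ t ≤ (1 + K * |α₁ t - α t|) * spaceSpeed R v α t := by
    unfold spaceSpeed
    rw [← mul_assoc]
    exact mul_le_mul_of_nonneg_right (hT.le_add_mul t ht _ hr) hv
  have hspace0 : ∀ {f : ℝ → ℝ}, f t ∈ I → 0 ≤ spaceSpeed R v f t := fun hf =>
    mul_nonneg (hR.pos _ hf t ht).le hv
  exact ⟨htime.1,
    hspace.trans ((mul_le_mul_of_nonneg_left hle (by linarith)).trans htime.2),
    sq_sub_sq_le_of_dilation hz (hspace0 hαI) hle (hspace0 (hT.mem t ht _ hr)) htime.2 hspace⟩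

theorem IsTightGapPair.properSpeed_gain {I : Set ℝ} {H R : ℝ → ℝ → ℝ} {v α α₁ : ℝ → ℝ} {r K E : ℝ}
    (h : IsTightGapPair (timeSpeed H α) (spaceSpeed R v α) a b A B P₀ P₁ κ)
    (hT : IsTube I H R α a b r K) (hH : IsTimeWeight I a b H) (hR : IsTimeWeight I a b R)
    (ht : t ∈ Icc a b) (hv : 0 ≤ v t) (hr : |α₁ t - α t| ≤ r) (hα : 0 < deriv α t)
    (hcausal : spaceSpeed R v α t ≤ timeSpeed H α t)
    (hα₁ : deriv α₁ t =
      deriv α t * (1 + 4 * K * |α₁ t - α t|) + ε * (E * balancedStep A B t))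
    (hm : 0 ≤ m) (hmE : m ≤ H (α t) t * E) (hEM : H (α t) t * E ≤ M) (hε : 0 ≤ ε)
    (hεκ : M * volume.real A * ε < κ) :
    0 < deriv α₁ t ∧ spaceSpeed R v α₁ t ≤ timeSpeed H α₁ t ∧
      properSpeed H R v α t + A.indicator (fun _ => √(P₀ * m * volume.real B) * √ε) t -
        2 * P₁ * M * volume.real A / κ * ε ≤ properSpeed H R v α₁ t := by
  have hαI : α t ∈ I := hT.mem t ht _ (by simpa using hT.radius_pos.le)
  obtain ⟨δ, hδ, hδ2, hpos, hle, hgain⟩ := h.exists_shift (mul_pos (hH.pos _ hαI t ht) hα)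
    (mul_nonneg (hR.pos _ hαI t ht).le hv) hcausal hm hmE hEM hε hεκ
  have hassoc : H (α t) t * E * (ε * balancedStep A B t) =
      H (α t) t * (ε * (E * balancedStep A B t)) := by ring
  rw [hassoc] at hδ hδ2
  obtain ⟨hpos₁, hle₁, hsq⟩ := hT.sq_sub_sq_le hH hR ht hv hr hα hα₁ hδ hδ2 hpos hle
  exact ⟨hpos₁, hle₁, hgain.trans (Real.sqrt_le_sqrt hsq)⟩

end Perturbation

section Variation

/-- The variation of a time component `α` in the direction `ψ`; the integrating factor `exp (k α)`
makes its derivative contain the dilation `k α' ψ` of `α'`. -/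
def expVariation (k ε : ℝ) (α ψ : ℝ → ℝ) (t : ℝ) : ℝ := α t + ε * (Real.exp (k * α t) * ψ t)

variable {I : Set ℝ} {H R : ℝ → ℝ → ℝ} {v α ψ : ℝ → ℝ} {a b k t w ε r : ℝ} {A B : Set ℝ}
  {P₀ P₁ κ : ℝ}

theorem expVariation_of_eq_zero (h : ψ t = 0) : expVariation k ε α ψ t = α t := by
  simp [expVariation, h]

theorem abs_expVariation_sub (hε : 0 ≤ ε) :
    |expVariation k ε α ψ t - α t| = ε * (Real.exp (k * α t) * |ψ t|) := by
  rw [expVariation, add_sub_cancel_left, abs_mul, abs_mul, abs_of_nonneg hε, Real.abs_exp]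

theorem absolutelyContinuousOnInterval_expVariation (hα : AbsolutelyContinuousOnInterval α a b)
    (hψ : AbsolutelyContinuousOnInterval ψ a b) :
    AbsolutelyContinuousOnInterval (expVariation k ε α ψ) a b := by
  have hexp : LocallyLipschitz fun x => Real.exp (k * x) := by
    have : ContDiff ℝ 1 fun x => Real.exp (k * x) := by fun_prop
    exact this.locallyLipschitz
  exact hα.fun_add
    (((absolutelyContinuousOnInterval_comp_of_locallyLipschitz hexp hα).fun_mul hψ).const_mul ε)

theorem deriv_expVariation (hα : DifferentiableAt ℝ α t) (hψ : HasDerivAt ψ w t) (hε : 0 ≤ ε)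
    (hkψ : 0 ≤ k * ψ t) :
    deriv (expVariation k ε α ψ) t = deriv α t * (1 + |k| * |expVariation k ε α ψ t - α t|) +
      ε * (Real.exp (k * α t) * w) := by
  have hderiv := hα.hasDerivAt.add ((((hα.hasDerivAt.const_mul k).exp).mul hψ).const_mul ε)
  refine (HasDerivAt.deriv hderiv).trans ?_
  rw [abs_expVariation_sub hε]
  have : |k| * |ψ t| = k * ψ t := by rw [← abs_mul, abs_of_nonneg hkψ]
  linear_combination -(deriv α t * ε * Real.exp (k * α t)) * this

theorem eventually_const_mul_lt (C : ℝ) {q : ℝ} (hq : 0 < q) :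
    ∀ᶠ ε in 𝓝[>] (0 : ℝ), C * ε < q := by
  have hcont : ContinuousAt (fun ε : ℝ => C * ε) 0 := by fun_prop
  exact (hcont.eventually (gt_mem_nhds (by simpa))).filter_mono nhdsWithin_le_nhds

theorem eventually_forall_abs_expVariation_sub_le (k : ℝ) (hα : ContinuousOn α (Icc a b))
    (hψ : ContinuousOn ψ (Icc a b)) (hr : 0 < r) :
    ∀ᶠ ε in 𝓝[>] (0 : ℝ), ∀ t ∈ Icc a b, |expVariation k ε α ψ t - α t| ≤ r := by
  obtain ⟨C, hC⟩ := isCompact_Icc.exists_bound_of_continuousOn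
    (((continuousOn_const.mul hα).rexp (f := fun t => k * α t)).mul hψ)
  filter_upwards [eventually_const_mul_lt C hr, self_mem_nhdsWithin] with ε hεr hε t ht
  have hbound := hC t ht
  rw [Pi.mul_apply, norm_mul, Real.norm_eq_abs, Real.norm_eq_abs, Real.abs_exp] at hbound
  rw [abs_expVariation_sub (le_of_lt hε)]
  linarith [mul_le_mul_of_nonneg_left hbound (le_of_lt hε)]

theorem exists_pos_bounds_of_continuousOn_Icc {f : ℝ → ℝ} (hf : ContinuousOn f (Icc a b))
    (hpos : ∀ t ∈ Icc a b, 0 < f t) : ∃ m > 0, ∃ M, ∀ t ∈ Icc a b, m ≤ f t ∧ f t ≤ M := by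
  obtain ⟨m, hm, hmf⟩ := isCompact_Icc.exists_forall_le' hf hpos
  obtain ⟨M, hM⟩ := isCompact_Icc.exists_bound_of_continuousOn hf
  exact ⟨m, hm, M, fun t ht => ⟨hmf t ht, (le_abs_self _).trans (hM t ht)⟩⟩

theorem IsTightGapPair.exists_eventually_sqrt_gain (hI : IsOpen I) (hH : IsTimeWeight I a b H)
    (hR : IsTimeWeight I a b R) (hv : ∀ t, 0 ≤ v t) (hab : a ≤ b)
    (hα : IsCausalTime I H R v α a b)
    (h : IsTightGapPair (timeSpeed H α) (spaceSpeed R v α) a b A B P₀ P₁ κ) :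
    ∃ k, ∃ c > 0, ∃ C, ∀ᶠ ε in 𝓝[>] (0 : ℝ),
      IsCausalTime I H R v (expVariation k ε α (balancedBump A B a)) a b ∧
      ∀ᵐ t : ℝ, t ∈ Ioo a b →
        properSpeed H R v α t + A.indicator (fun _ => c * √ε) t - C * ε ≤
          properSpeed H R v (expVariation k ε α (balancedBump A B a)) t := by
  have hαc := hα.continuousOn hab
  obtain ⟨r, K, hT⟩ := exists_isTube hI hH hR hαc hα.mem
  obtain ⟨k, hk, hkψ⟩ := h.exists_abs_eq_mul_balancedBump_nonneg
    (mul_nonneg zero_le_four hT.rate_nonneg)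
  have hw := h.intervalIntegrable_balancedStep
  have hψ : AbsolutelyContinuousOnInterval (balancedBump A B a) a b :=
    hw.absolutelyContinuousOnInterval_intervalIntegral left_mem_uIcc
  have hψc : ContinuousOn (balancedBump A B a) (Icc a b) := by
    simpa only [uIcc_of_le hab] using hψ.continuousOn
  obtain ⟨m, hm, M, hmM⟩ := exists_pos_bounds_of_continuousOn_Icc
    (f := fun t => H (α t) t * Real.exp (k * α t))
    ((hH.continuousOn_comp hαc hα.mem).mul (continuousOn_const.mul hαc).rexp)
    fun t ht => mul_pos (hH.pos _ (hα.mem t ht) t ht) (Real.exp_pos _)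
  have hc : 0 < √(P₀ * m * volume.real B) :=
    Real.sqrt_pos.2 (mul_pos (mul_pos h.lower_pos hm) h.measureReal_right_pos)
  refine ⟨k, _, hc, 2 * P₁ * M * volume.real A / κ, ?_⟩
  filter_upwards [eventually_forall_abs_expVariation_sub_le k hαc hψc hT.radius_pos,
    eventually_const_mul_lt (M * volume.real A) h.gap_pos, self_mem_nhdsWithin] with ε hr hεκ hε
  set α₁ := expVariation k ε α (balancedBump A B a)
  have hgain : ∀ᵐ t : ℝ, t ∈ Ioo a b →
      0 < deriv α₁ t ∧ spaceSpeed R v α₁ t ≤ timeSpeed H α₁ t ∧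
        properSpeed H R v α t + A.indicator (fun _ => √(P₀ * m * volume.real B) * √ε) t -
          2 * P₁ * M * volume.real A / κ * ε ≤ properSpeed H R v α₁ t := by
    filter_upwards [hα.absolutelyContinuous.ae_differentiableAt, hw.ae_hasDerivAt_integral,
      hα.deriv_pos, hα.causal] with t hαt hψt hpos hcausal ht
    have ht' := Ioo_subset_Icc_self ht
    have hderivψ := hψt (Icc_subset_uIcc ht') a left_mem_uIcc
    have hderiv := deriv_expVariation (hαt (Icc_subset_uIcc ht')) hderivψ (le_of_lt hε) (hkψ t ht')
    rw [hk] at hderiv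
    exact h.properSpeed_gain hT hH hR ht' (hv t) (hr t ht') (hpos ht) (hcausal ht) hderiv
      hm.le (hmM t ht').1 (hmM t ht').2 (le_of_lt hε) hεκ
  exact ⟨⟨absolutelyContinuousOnInterval_expVariation hα.absolutelyContinuous hψ,
    fun t ht => hT.mem t ht _ (hr t ht), hgain.mono fun t h ht => (h ht).1,
    hgain.mono fun t h ht => (h ht).2.1⟩, hgain.mono fun t h ht => (h ht).2.2⟩

theorem eventually_integral_lt_of_sqrt_gain {f : ℝ → ℝ} {F : ℝ → ℝ → ℝ} {c C : ℝ} (hab : a ≤ b)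
    (hf : IntervalIntegrable f volume a b) (hA : MeasurableSet A) (hAs : A ⊆ Ioo a b)
    (hA0 : 0 < volume A) (hc : 0 < c)
    (hF : ∀ᶠ ε in 𝓝[>] (0 : ℝ), IntervalIntegrable (F ε) volume a b)
    (hgain : ∀ᶠ ε in 𝓝[>] (0 : ℝ), ∀ᵐ t : ℝ, t ∈ Ioo a b →
      f t + A.indicator (fun _ => c * √ε) t - C * ε ≤ F ε t) :
    ∀ᶠ ε in 𝓝[>] (0 : ℝ), ∫ t in a..b, f t < ∫ t in a..b, F ε t := by
  have hAfin : volume A ≠ ∞ := measure_ne_top_of_subset hAs (by simp)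
  have hvol : 0 < volume.real A := ENNReal.toReal_pos hA0.ne' hAfin
  have hlim : Tendsto (fun ε : ℝ => (b - a) * C * √ε) (𝓝[>] 0) (𝓝 0) := by
    have hcont : Continuous fun ε : ℝ => (b - a) * C * √ε := by fun_prop
    simpa using (hcont.tendsto 0).mono_left nhdsWithin_le_nhds
  filter_upwards [hF, hgain, hlim.eventually (gt_mem_nhds (mul_pos hvol hc)),
    self_mem_nhdsWithin] with ε hFε hgainε hsmall hε
  have hind : IntervalIntegrable (A.indicator fun _ => c * √ε) volume a b :=
    ((integrable_indicator_iff hA).2 (integrableOn_const hAfin)).intervalIntegrable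
  have hsqrt : √ε * √ε = ε := Real.mul_self_sqrt (le_of_lt hε)
  calc ∫ t in a..b, f t
      < (∫ t in a..b, f t) + √ε * (volume.real A * c - (b - a) * C * √ε) :=
        lt_add_of_pos_right _ (mul_pos (Real.sqrt_pos.2 hε) (sub_pos.2 hsmall))
    _ = ∫ t in a..b, (f t + A.indicator (fun _ => c * √ε) t - C * ε) := by
        rw [intervalIntegral.integral_sub (hf.add hind) intervalIntegrable_const,
          intervalIntegral.integral_add hf hind, intervalIntegral.integral_const,
          integral_indicator_const_of_subset_Ioo hab hA hAs, smul_eq_mul]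
        linear_combination -(b - a) * C * hsqrt
    _ ≤ ∫ t in a..b, F ε t :=
        intervalIntegral.integral_mono_ae_restrict hab
          ((hf.add hind).sub intervalIntegrable_const) hFε <| by
            rw [← Measure.restrict_congr_set Ioo_ae_eq_Icc]
            exact (ae_restrict_iff' measurableSet_Ioo).2 hgainε

theorem integral_properSpeed_eq_zero (hab : a ≤ b)
    (hP0 : ∀ᵐ t ∂volume.restrict (Ioo a b), 0 < timeSpeed H α t)
    (hle : ∀ᵐ t ∂volume.restrict (Ioo a b), timeSpeed H α t ≤ spaceSpeed R v α t) :
    ∫ t in a..b, properSpeed H R v α t = 0 := by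
  rw [intervalIntegral.integral_of_le hab, integral_Ioc_eq_integral_Ioo]
  refine integral_eq_zero_of_ae ?_
  filter_upwards [hP0, hle] with t hpos hle
  exact Real.sqrt_eq_zero_of_nonpos (sub_nonpos.2 (pow_le_pow_left₀ hpos.le hle 2))

theorem IsCausalTime.exists_isTightGapPair (hab : a ≤ b) (hH : IsTimeWeight I a b H)
    (hR : IsTimeWeight I a b R) (hv : IntervalIntegrable v volume a b)
    (hα : IsCausalTime I H R v α a b)
    (hnot : ¬∀ᵐ t : ℝ, t ∈ Ioo a b → spaceSpeed R v α t < timeSpeed H α t)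
    (hpos : 0 < ∫ t in a..b, properSpeed H R v α t) :
    ∃ A B P₀ P₁ κ, IsTightGapPair (timeSpeed H α) (spaceSpeed R v α) a b A B P₀ P₁ κ := by
  have hmeas : ∀ {f : ℝ → ℝ}, IntervalIntegrable f volume a b →
      AEMeasurable f (volume.restrict (Ioo a b)) := fun hf =>
    ((intervalIntegrable_iff_integrableOn_Ioo_of_le hab).1 hf).aestronglyMeasurable.aemeasurable
  rw [← ae_restrict_iff' measurableSet_Ioo] at hnot
  have htime := (ae_restrict_iff' measurableSet_Ioo).2 (hH.ae_timeSpeed_pos hα.mem hα.deriv_pos)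
  exact _root_.exists_isTightGapPair (hmeas (hα.intervalIntegrable_timeSpeed hab hH))
    (hmeas (hα.intervalIntegrable_spaceSpeed hab hR hv)) htime
    ((ae_restrict_iff' measurableSet_Ioo).2 hα.causal) hnot
    fun hle => hpos.ne' (integral_properSpeed_eq_zero hab htime hle)

theorem IsCausalTime.exists_integral_properSpeed_lt (hI : IsOpen I) (hab : a ≤ b)
    (hH : IsTimeWeight I a b H) (hR : IsTimeWeight I a b R) (hv0 : ∀ t, 0 ≤ v t)
    (hv : IntervalIntegrable v volume a b) (hα : IsCausalTime I H R v α a b)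
    (hnot : ¬∀ᵐ t : ℝ, t ∈ Ioo a b → spaceSpeed R v α t < timeSpeed H α t)
    (hpos : 0 < ∫ t in a..b, properSpeed H R v α t) :
    ∃ α₁, IsCausalTime I H R v α₁ a b ∧ α₁ a = α a ∧ α₁ b = α b ∧
      ∫ t in a..b, properSpeed H R v α t < ∫ t in a..b, properSpeed H R v α₁ t := by
  obtain ⟨A, B, P₀, P₁, κ, h⟩ := hα.exists_isTightGapPair hab hH hR hv hnot hpos
  obtain ⟨k, c, hc, C, hvar⟩ := h.exists_eventually_sqrt_gain hI hH hR hv0 hab hα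
  have hlonger := eventually_integral_lt_of_sqrt_gain hab
    (hα.intervalIntegrable_properSpeed hab hH hR hv) h.left_measurable h.left_subset h.left_pos hc
    (hvar.mono fun ε hε => hε.1.intervalIntegrable_properSpeed hab hH hR hv)
    (hvar.mono fun ε hε => hε.2)
  obtain ⟨ε, hvarε, hlt⟩ := (hvar.and hlonger).exists
  exact ⟨_, hvarε.1, expVariation_of_eq_zero balancedBump_left,
    expVariation_of_eq_zero (h.balancedBump_right hab), hlt⟩

end Variation

section LorentzianProduct

theorem LocLipOn.continuous {X : Type*} [MetricSpace X] {I : Set ℝ} {f : ℝ → X → ℝ} {s : ℝ}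
    (hf : LocLipOn I f) (hs : s ∈ I) : Continuous (f s) := by
  refine CompactlyCoherentSpace.isCoherentWith.continuous_iff.2 fun K hK => ?_
  obtain ⟨C, hC⟩ := hf {s} K (singleton_subset_iff.2 hs) isCompact_singleton hK
  refine LipschitzOnWith.continuousOn (K := C.toNNReal) (.of_dist_le_mul fun x hx y hy => ?_)
  have hle := hC s rfl s rfl x hx y hy
  rw [sub_self, abs_zero, zero_add] at hle
  exact hle.trans (mul_le_mul_of_nonneg_right (le_max_left _ _) dist_nonneg)

theorem LocLipOn.condH {X : Type*} [MetricSpace X] {I : Set ℝ} {f : ℝ → X → ℝ}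
    (hf : LocLipOn I f) : CondH I f := by
  intro J K hJI hJ hK
  obtain ⟨C, hC⟩ := hf J K hJI hJ hK
  refine ⟨max C 1, lt_max_of_lt_right one_pos, fun s hs s' hs' x hx => ?_⟩
  have hle := hC s hs s' hs' x hx x hx
  rw [dist_self, add_zero] at hle
  exact hle.trans (mul_le_mul_of_nonneg_right (le_max_left _ _) (abs_nonneg _))

theorem CausalCurve.futureCausal_of_timeSep_pos {X : Type*} {I : Set ℝ} {d : ℝ → X → X → ℝ}
    {h : ℝ → X → ℝ} {α : ℝ → ℝ} {β : ℝ → X} {a b : ℝ} (hγ : CausalCurve I d h α β a b)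
    (hpos : 0 < timeSep I d h (α a, β a) (α b, β b)) : FutureCausal I d h α β a b := by
  obtain ⟨hcurve, hdir, hineq⟩ := hγ
  refine ⟨hcurve, hdir.resolve_right fun hpast => ?_, hineq⟩
  obtain ⟨-, ⟨a', b', α', β', ⟨hcurve', hfut, -⟩, ha, -, hb, -, -⟩, -⟩ := lt_sSup_iff.1 hpos
  obtain ⟨hab, hα, -, -⟩ := hcurve
  obtain ⟨hab', hα', -, -⟩ := hcurve'
  have hdecr := lt_of_ae_deriv_neg hab (ACOn.absolutelyContinuousOnInterval hab.le hα) hpast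
  have hincr := lt_of_ae_deriv_pos hab' (ACOn.absolutelyContinuousOnInterval hab'.le hα') hfut
  rw [ha, hb] at hincr
  exact hdecr.not_gt hincr

theorem FutureCausal.ofReal_lorLen_le_timeSep {X : Type*} {I : Set ℝ} {d : ℝ → X → X → ℝ}
    {h : ℝ → X → ℝ} {α : ℝ → ℝ} {β : ℝ → X} {a b : ℝ} (hγ : FutureCausal I d h α β a b) :
    ENNReal.ofReal (lorLen d h α β a b) ≤ timeSep I d h (α a, β a) (α b, β b) :=
  le_sSup ⟨a, b, α, β, hγ, rfl, rfl, rfl, rfl, rfl⟩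

/-- The restriction of a function on `I × X` to the curve `β` in `X`. -/
def alongCurve {X : Type*} (f : ℝ → X → ℝ) (β : ℝ → X) (s t : ℝ) : ℝ := f s (β t)

/-- The generalized metric speed of `β` at time `s` is obtained from the reference speed `v` by the
weight `R s`. -/
def HasWeightedSpeed {X : Type*} (I : Set ℝ) (d : ℝ → X → X → ℝ) (R : ℝ → ℝ → ℝ) (v : ℝ → ℝ)
    (β : ℝ → X) (a b : ℝ) : Prop :=
  ∀ᵐ t : ℝ, t ∈ Ioo a b → ∀ s ∈ I, genSpeed d β s t = R s t * v t

theorem CondH.isTimeWeight {X : Type*} [TopologicalSpace X] {I : Set ℝ} {f : ℝ → X → ℝ}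
    {β : ℝ → X} {a b : ℝ} (hf : CondH I f) (hpos : ∀ s ∈ I, ∀ x, 0 < f s x)
    (hcont : ∀ s ∈ I, Continuous (f s)) (hβ : ContinuousOn β (Icc a b)) :
    IsTimeWeight I a b (alongCurve f β) where
  pos s hs t _ := hpos s hs (β t)
  continuousOn s hs := (hcont s hs).comp_continuousOn hβ
  lipschitz J hJI hJ := by
    obtain ⟨C, -, hC⟩ := hf J (β '' Icc a b) hJI hJ (isCompact_Icc.image_of_continuousOn hβ)
    exact ⟨C, fun s hs s' hs' t ht => hC s hs s' hs' _ (mem_image_of_mem β ht)⟩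

variable {X : Type*} {I : Set ℝ} {d : ℝ → X → X → ℝ} {h : ℝ → X → ℝ} {R : ℝ → ℝ → ℝ}
  {v α : ℝ → ℝ} {β : ℝ → X} {a b : ℝ}

theorem HasWeightedSpeed.ae_genSpeed_eq (hβ : HasWeightedSpeed I d R v β a b)
    (hα : ∀ t ∈ Icc a b, α t ∈ I) :
    ∀ᵐ t : ℝ, t ∈ Ioo a b → genSpeed d β (α t) t = spaceSpeed R v α t := by
  filter_upwards [hβ] with t hspeed ht
  exact hspeed ht _ (hα t (Ioo_subset_Icc_self ht))

theorem HasWeightedSpeed.lorLen_eq (hβ : HasWeightedSpeed I d R v β a b) (hab : a ≤ b)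
    (hα : ∀ t ∈ Icc a b, α t ∈ I) :
    lorLen d h α β a b = ∫ t in a..b, properSpeed (alongCurve h β) R v α t := by
  refine intervalIntegral.integral_congr_ae ?_
  rw [uIoc_of_le hab]
  refine ae_mem_Ioc_of_ae_mem_Ioo ?_
  filter_upwards [hβ.ae_genSpeed_eq hα] with t hspeed ht
  rw [hspeed ht, ← mul_pow]
  rfl

theorem HasWeightedSpeed.causalIneq_iff (hβ : HasWeightedSpeed I d R v β a b)
    (hH : IsTimeWeight I a b (alongCurve h β)) (hR : IsTimeWeight I a b R) (hv : ∀ t, 0 ≤ v t)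
    (hαI : ∀ t ∈ Icc a b, α t ∈ I) (hα : FutureDirected α a b) :
    CausalIneq d h α β a b ↔
      ∀ᵐ t : ℝ, t ∈ Ioo a b → spaceSpeed R v α t ≤ timeSpeed (alongCurve h β) α t := by
  refine eventually_congr ?_
  filter_upwards [hβ.ae_genSpeed_eq hαI, hH.ae_timeSpeed_pos hαI hα] with t hspeed hpos
  refine forall_congr' fun ht => ?_
  rw [hspeed ht, ← mul_pow]
  exact sq_le_sq₀ (hR.spaceSpeed_nonneg hv hαI (Ioo_subset_Icc_self ht)) (hpos ht).le

theorem HasWeightedSpeed.timelikeIneq_iff (hβ : HasWeightedSpeed I d R v β a b)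
    (hH : IsTimeWeight I a b (alongCurve h β)) (hR : IsTimeWeight I a b R) (hv : ∀ t, 0 ≤ v t)
    (hαI : ∀ t ∈ Icc a b, α t ∈ I) (hα : FutureDirected α a b) :
    TimelikeIneq d h α β a b ↔
      ∀ᵐ t : ℝ, t ∈ Ioo a b → spaceSpeed R v α t < timeSpeed (alongCurve h β) α t := by
  refine eventually_congr ?_
  filter_upwards [hβ.ae_genSpeed_eq hαI, hH.ae_timeSpeed_pos hαI hα] with t hspeed hpos
  refine forall_congr' fun ht => ?_
  rw [hspeed ht, ← mul_pow]
  exact sq_lt_sq₀ (hR.spaceSpeed_nonneg hv hαI (Ioo_subset_Icc_self ht)) (hpos ht).le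

theorem HasWeightedSpeed.futureCausal_iff (hβ : HasWeightedSpeed I d R v β a b)
    (hH : IsTimeWeight I a b (alongCurve h β)) (hR : IsTimeWeight I a b R) (hv : ∀ t, 0 ≤ v t)
    (hab : a < b) (hβd : ∀ s ∈ I, ACOn (d s) β a b) :
    FutureCausal I d h α β a b ↔ IsCausalTime I (alongCurve h β) R v α a b := by
  constructor
  · rintro ⟨⟨-, hα, -, hαI⟩, hfut, hineq⟩
    exact ⟨ACOn.absolutelyContinuousOnInterval hab.le hα, hαI, hfut,
      (hβ.causalIneq_iff hH hR hv hαI hfut).1 hineq⟩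
  · rintro ⟨hα, hαI, hfut, hineq⟩
    exact ⟨⟨hab, .of_absolutelyContinuousOnInterval hab.le hα, hβd, hαI⟩, hfut,
      (hβ.causalIneq_iff hH hR hv hαI hfut).2 hineq⟩

theorem HasWeightedSpeed.timelikeIneq_of_maximizing (hβ : HasWeightedSpeed I d R v β a b)
    (hI : IsOpen I) (hH : IsTimeWeight I a b (alongCurve h β)) (hR : IsTimeWeight I a b R)
    (hv0 : ∀ t, 0 ≤ v t) (hv : IntervalIntegrable v volume a b)
    (hγ : FutureCausal I d h α β a b) (hpos : 0 < lorLen d h α β a b)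
    (hmax : ENNReal.ofReal (lorLen d h α β a b) = timeSep I d h (α a, β a) (α b, β b)) :
    TimelikeIneq d h α β a b := by
  obtain ⟨⟨hab, -, hβd, hαI⟩, hfut, -⟩ := id hγ
  have hα := (hβ.futureCausal_iff hH hR hv0 hab hβd).1 hγ
  by_contra hnot
  rw [hβ.timelikeIneq_iff hH hR hv0 hαI hfut] at hnot
  obtain ⟨α₁, hα₁, ha, hb, hlonger⟩ := hα.exists_integral_properSpeed_lt hI hab.le hH hR hv0 hv
    hnot (hβ.lorLen_eq hab.le hαI ▸ hpos)
  rw [← hβ.lorLen_eq hab.le hαI, ← hβ.lorLen_eq hab.le hα₁.mem] at hlonger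
  have hle := ((hβ.futureCausal_iff hH hR hv0 hab hβd).2 hα₁).ofReal_lorLen_le_timeSep
  rw [ha, hb, ← hmax] at hle
  exact hle.not_gt ((ENNReal.ofReal_lt_ofReal_iff (hpos.trans hlonger)).2 hlonger)

end LorentzianProduct

theorem maximizing_causal_curve_is_timelike_general {X : Type*} [MetricSpace X]
    (hlen : IsLengthMetric X) {I : Set ℝ} (hI : IsOpen I) {h ρ : ℝ → X → ℝ}
    (hpos : ∀ s ∈ I, ∀ x, 0 < h s x) (hρpos : ∀ s ∈ I, ∀ x, 0 < ρ s x)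
    (hcont : ∀ s ∈ I, Continuous (h s)) (hρcont : ∀ s ∈ I, Continuous (ρ s))
    (hlip : CondH I h) (hρlip : CondH I ρ) {a b : ℝ} {α : ℝ → ℝ} {β : ℝ → X}
    (hcaus : CausalCurve I (fun s => confMetric (ρ s)) h α β a b)
    (hpos' : 0 < lorLen (fun s => confMetric (ρ s)) h α β a b)
    (hmax : ENNReal.ofReal (lorLen (fun s => confMetric (ρ s)) h α β a b) =
      timeSep I (fun s => confMetric (ρ s)) h (α a, β a) (α b, β b)) :
    TimelikeIneq (fun s => confMetric (ρ s)) h α β a b := by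
  have hγ := hcaus.futureCausal_of_timeSep_pos (hmax ▸ ENNReal.ofReal_pos.2 hpos')
  obtain ⟨⟨hab, -, hβd, hαI⟩, -, -⟩ := id hγ
  have ha : α a ∈ I := hαI a (left_mem_Icc.2 hab.le)
  have hβ := hlen.acOn_of_acOn_confMetric (hρcont _ ha) (hρpos _ ha) (hβd _ ha)
  have hspeed : HasWeightedSpeed I (fun s => confMetric (ρ s)) (alongCurve ρ β) (mSpeed dist β)
      β a b := hlen.ae_genSpeed_confMetric hρcont hρpos hab.le hβ
  exact hspeed.timelikeIneq_of_maximizing hI (hlip.isTimeWeight hpos hcont hβ.continuousOn)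
    (hρlip.isTimeWeight hρpos hρcont hβ.continuousOn)
    (mSpeed_nonneg (fun _ _ => dist_nonneg) β) (hβ.intervalIntegrable_mSpeed hab.le) hγ hpos' hmax

/-- **Regularity in the conformal case** (Theorem 5.2): if `d` is a locally compact
length metric, `h, ρ` are locally Lipschitz and `F = {d_{ρ(s,·)}}`, then any
maximizing causal curve of positive Lorentzian length is timelike. -/
theorem maximizing_causal_curve_is_timelike {X : Type*} [MetricSpace X]
    [LocallyCompactSpace X] (hlen : IsLengthMetric X)
    (I : Set ℝ) (hIopen : IsOpen I) (hIord : I.OrdConnected) (hIne : I.Nonempty)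
    (h ρ : ℝ → X → ℝ)
    (hpos : ∀ s ∈ I, ∀ x : X, 0 < h s x) (hρpos : ∀ s ∈ I, ∀ x : X, 0 < ρ s x)
    (hhlip : LocLipOn I h) (hρlip : LocLipOn I ρ)
    (a b : ℝ) (α : ℝ → ℝ) (β : ℝ → X)
    (hcaus : CausalCurve I (fun s => confMetric (ρ s)) h α β a b)
    (hpos' : 0 < lorLen (fun s => confMetric (ρ s)) h α β a b)
    (hmax : ENNReal.ofReal (lorLen (fun s => confMetric (ρ s)) h α β a b) =
      timeSep I (fun s => confMetric (ρ s)) h (α a, β a) (α b, β b)) :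
    TimelikeIneq (fun s => confMetric (ρ s)) h α β a b :=
  maximizing_causal_curve_is_timelike_general hlen hIopen hpos hρpos
    (fun _ hs => hhlip.continuous hs) (fun _ hs => hρlip.continuous hs) hhlip.condH hρlip.condH
    hcaus hpos' hmax

end
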